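/- Let i ∈ Σ_{n+1}. If there exists a sequence (σ_1, …, σ_n) ∈ {A, D}^n such that ind_{σ_k}(C_{σ_{k+1}} ∘ ⋯ ∘ C_{σ_n}(i)) = 0 for all k = n, n−1, …, 1, then for every dominant integral weight λ the string polytope Δ_i(λ) is an integral (lattice) polytope, i.e. all of its vertices lie in ℤ^N. -/

import Mathlib

open scoped Classical

noncomputable section

namespace StringPolytope

/-! ### Words, reduced words, two-moves -/

/-- the simple transposition `s_a = (a, a+1)` acting on `ℕ` (wires are `1, …, n+1`). -/
def sTrans (a : ℕ) : Equiv.Perm ℕ := Equiv.swap a (a + 1)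

/-- product `s_{i₁} ⋯ s_{i_N}` of the simple transpositions of a word. -/
def wordProd (w : List ℕ) : Equiv.Perm ℕ := (w.map sTrans).prod

/-- the longest element `w₀` of the symmetric group on `{1, …, n+1}`,
sending `k ↦ n + 2 - k` there and fixing everything else. -/
def longestPerm (n : ℕ) : Equiv.Perm ℕ :=
  Function.Involutive.toPerm
    (fun k => if 1 ≤ k ∧ k ≤ n + 1 then n + 2 - k else k)
    (by intro k; dsimp only; split_ifs <;> omega)

/-- `w ∈ Σ_{n+1}`: a reduced word of the longest element of `S_{n+1}`,
i.e. a word over `[n] = {1,…,n}` of length `N = n(n+1)/2` whose product is `w₀`. -/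
def IsReduced (n : ℕ) (w : List ℕ) : Prop :=
  w.length = n * (n + 1) / 2 ∧ (∀ a ∈ w, 1 ≤ a ∧ a ≤ n) ∧ wordProd w = longestPerm n

/-- a single 2-move: exchange two adjacent letters `(a, b)` with `|a - b| > 1`. -/
def TwoMoveStep (w w' : List ℕ) : Prop :=
  ∃ u v a b, (a + 1 < b ∨ b + 1 < a) ∧ w = u ++ a :: b :: v ∧ w' = u ++ b :: a :: v

/-- 2-move equivalence of words. -/
def TwoMoveEquiv : List ℕ → List ℕ → Prop := Relation.ReflTransGen TwoMoveStep

/-- `A_n = (1, 2, …, n)`. -/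
def ascWord (n : ℕ) : List ℕ := (List.range n).map (· + 1)

/-- `D_n = (n, n-1, …, 1)`. -/
def descWord (n : ℕ) : List ℕ := (ascWord n).reverse

/-! ### The wiring diagram -/

/-- the letter `i_j` of `w` (1-based index `j`); the node `t_j` lies in column `i_j`. -/
def letterAt (w : List ℕ) (j : ℕ) : ℕ := w.getD (j - 1) 0

/-- `1 ≤ j ≤ N`: `t_j` is an actual node of the diagram. -/
def ValidNode (w : List ℕ) (j : ℕ) : Prop := 1 ≤ j ∧ j ≤ w.length

/-- the column-to-wire assignment just above node `t_j`
(at the top of the diagram, wire `k` is in column `k`). -/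
def stateAbove (w : List ℕ) (j : ℕ) : Equiv.Perm ℕ := wordProd (w.take (j - 1))

/-- the column-to-wire assignment just below node `t_j`. -/
def stateBelow (w : List ℕ) (j : ℕ) : Equiv.Perm ℕ := wordProd (w.take j)

/-- one of the two wires crossing at node `t_j` (the one leaving upward-left). -/
def wireX (w : List ℕ) (j : ℕ) : ℕ := stateAbove w j (letterAt w j)

/-- the other wire crossing at node `t_j` (the one leaving upward-right). -/
def wireY (w : List ℕ) (j : ℕ) : ℕ := stateAbove w j (letterAt w j + 1)

/-- the node `t_j` lies on the wire `ℓ_r`. -/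
def NodeOnWire (w : List ℕ) (j r : ℕ) : Prop := wireX w j = r ∨ wireY w j = r

/-- given one wire `r` at node `t_j`, the other wire crossing there. -/
def otherWire (w : List ℕ) (j r : ℕ) : ℕ := if wireX w j = r then wireY w j else wireX w j

/-- the column of wire `ℓ_r` at the height of node `t_j`. -/
def wireCol (w : List ℕ) (j r : ℕ) : ℕ := (stateBelow w j).symm r

/-- node `t_j` lies strictly below the wire `ℓ_{n+1}`
(which runs from the bottom-left corner to the top-right corner). -/
def BelowWireLast (n : ℕ) (w : List ℕ) (j : ℕ) : Prop :=
  wireCol w j (n + 1) < letterAt w j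

/-- node `t_j` lies strictly above the wire `ℓ_{n+1}`. -/
def AboveWireLast (n : ℕ) (w : List ℕ) (j : ℕ) : Prop :=
  letterAt w j + 1 < wireCol w j (n + 1)

/-- node `t_j` lies strictly below the wire `ℓ_1`
(which runs from the bottom-right corner to the top-left corner). -/
def BelowWireOne (w : List ℕ) (j : ℕ) : Prop :=
  letterAt w j + 1 < wireCol w j 1

/-- node `t_j` lies strictly above the wire `ℓ_1`. -/
def AboveWireOne (w : List ℕ) (j : ℕ) : Prop :=
  wireCol w j 1 < letterAt w j

/-! ### Rigorous (Gleizer–Postnikov) paths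

A path in `G(i, k)` is encoded by `k` together with the list of its switching
nodes, in order of travel.  Wires `ℓ_1, …, ℓ_k` are oriented upward
(decreasing node index) and the remaining wires downward. -/

/-- the (1-based indices of the) nodes lying on wire `ℓ_r`, in order of increasing index. -/
def nodesOn (w : List ℕ) (r : ℕ) : List ℕ :=
  ((List.range w.length).map (· + 1)).filter (fun j => decide (NodeOnWire w j r))

/-- nodes on wire `ℓ_r` strictly between the nodes `t_a` and `t_b`. -/
def segList (w : List ℕ) (r a b : ℕ) : List ℕ :=
  (nodesOn w r).filter (fun j => decide (min a b < j ∧ j < max a b))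

/-- nodes on wire `ℓ_r` strictly below the node `t_a`. -/
def tailList (w : List ℕ) (r a : ℕ) : List ℕ :=
  (nodesOn w r).filter (fun j => decide (a < j))

/-- a forbidden fragment of `G(i, k)`: the path passes straight through node `t_j`
travelling along the wire `ℓ_r`, where the other wire `ℓ_b` crossing there has the same
orientation as `ℓ_r` and (`r < b` if both upward, `r > b` if both downward). -/
def Forbidden (w : List ℕ) (k j r : ℕ) : Prop :=
  (r ≤ k ∧ otherWire w j r ≤ k ∧ r < otherWire w j r) ∨
  (k < r ∧ k < otherWire w j r ∧ otherWire w j r < r)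

/-- travelling in `G(i,k)`: currently on wire `ℓ_r` at node `t_a` (just switched there),
with future switching nodes `ms`; the travel is legal and ends at `L_{k+1}`. -/
def TravelOK (w : List ℕ) (k : ℕ) : ℕ → ℕ → List ℕ → Prop
  | r, a, [] => r = k + 1 ∧ ∀ j ∈ tailList w r a, ¬ Forbidden w k j r
  | r, a, m :: ms =>
      ValidNode w m ∧ NodeOnWire w m r ∧
      (if r ≤ k then m < a else a < m) ∧
      (∀ j ∈ segList w r a m, ¬ Forbidden w k j r) ∧
      TravelOK w k (otherWire w m r) m ms

/-- all nodes visited after the switch at node `t_a` onto wire `ℓ_r`. -/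
def visitTail (w : List ℕ) : ℕ → ℕ → List ℕ → List ℕ
  | r, a, [] => tailList w r a
  | r, a, m :: ms => segList w r a m ++ m :: visitTail w (otherWire w m r) m ms

/-- the list of all nodes visited by the path (switching nodes and straight passes). -/
def visitList (w : List ℕ) (k : ℕ) : List ℕ → List ℕ
  | [] => []
  | m :: ms => tailList w k m ++ m :: visitTail w (otherWire w m k) m ms

/-- `(k, ms)` encodes a rigorous (Gleizer–Postnikov) path in `G(i, k)`:
it starts at `L_k` going up the wire `ℓ_k`, switches wires exactly at the nodes
listed in `ms`, respects the orientation, ends at `L_{k+1}`, contains no forbidden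
fragment and passes through each node at most once. -/
def IsGPPath (n : ℕ) (w : List ℕ) (k : ℕ) (ms : List ℕ) : Prop :=
  1 ≤ k ∧ k ≤ n ∧
  (match ms with
   | [] => False
   | m :: rest =>
       ValidNode w m ∧ NodeOnWire w m k ∧
       (∀ j ∈ tailList w k m, ¬ Forbidden w k j k) ∧
       TravelOK w k (otherWire w m k) m rest) ∧
  (visitList w k ms).Nodup

/-- the set `GP(i)` of all rigorous paths of `G(i)`. -/
def GP (n : ℕ) (w : List ℕ) : Set (ℕ × List ℕ) := {p | IsGPPath n w p.1 p.2}

/-- `|GP(i)|`, the number of rigorous paths. -/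
def numGP (n : ℕ) (w : List ℕ) : ℕ := (GP n w).ncard

/-- the successive switches of a path: `(node, from-wire, to-wire)`. -/
def pathSwitches (w : List ℕ) : ℕ → List ℕ → List (ℕ × ℕ × ℕ)
  | _, [] => []
  | r, m :: ms => (m, r, otherWire w m r) :: pathSwitches w (otherWire w m r) ms

/-- the wire-expression of a path: the successive wires travelled. -/
def wireSeq (w : List ℕ) : ℕ → List ℕ → List ℕ
  | r, [] => [r]
  | r, m :: ms => r :: wireSeq w (otherWire w m r) ms

/-- the peaks of a path: switching nodes where the path switches from an
upward wire to a downward wire. -/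
def peaks (w : List ℕ) (k : ℕ) (ms : List ℕ) : List ℕ :=
  ((pathSwitches w k ms).filter (fun e => decide (e.2.1 ≤ k ∧ k < e.2.2))).map (·.1)

/-! ### String cone, `λ`-cone, string polytope -/

/-- `N = n(n+1)/2`, the number of nodes. -/
abbrev Dim (n : ℕ) : ℕ := n * (n + 1) / 2

/-- the coefficient `a_j` of `t_j` in the string inequality of the path `(k, ms)`:
`+1` if the path switches at `t_j` from `ℓ_r` to `ℓ_s` with `r < s`,
`-1` if it switches with `r > s`, and `0` otherwise. -/
def coeff (w : List ℕ) (k : ℕ) (ms : List ℕ) (j : ℕ) : ℝ :=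
  ((pathSwitches w k ms).map (fun e =>
    if e.1 = j then (if e.2.1 < e.2.2 then (1 : ℝ) else -1) else 0)).sum

/-- the (primitive inward normal) coefficient vector of the string inequality of a path. -/
def normalVec (n : ℕ) (w : List ℕ) (p : ℕ × List ℕ) : Fin (Dim n) → ℝ :=
  fun j => coeff w p.1 p.2 ((j : ℕ) + 1)

/-- the left-hand side `∑ a_j t_j` of the string inequality of the path `p`. -/
def stringIneq (n : ℕ) (w : List ℕ) (p : ℕ × List ℕ) (t : Fin (Dim n) → ℝ) : ℝ :=
  ∑ j : Fin (Dim n), normalVec n w p j * t j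

/-- the string cone `C_i ⊆ ℝ^N`. -/
def stringCone (n : ℕ) (w : List ℕ) : Set (Fin (Dim n) → ℝ) :=
  {t | ∀ p ∈ GP n w, 0 ≤ stringIneq n w p t}

/-- the polyhedron cut out by all string inequalities except the one of `p₀`. -/
def stringConeExcept (n : ℕ) (w : List ℕ) (p₀ : ℕ × List ℕ) : Set (Fin (Dim n) → ℝ) :=
  {t | ∀ p ∈ GP n w, p ≠ p₀ → 0 ≤ stringIneq n w p t}

/-- the coefficient `a_k` in the `λ`-inequality of node `t_j`:
`1` if `t_k` is one column left or right of `t_j`, `-2` if in the same column. -/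
def lamCoeff (w : List ℕ) (j k : ℕ) : ℝ :=
  if letterAt w k = letterAt w j then -2
  else if letterAt w k = letterAt w j + 1 ∨ letterAt w k + 1 = letterAt w j then 1
  else 0

/-- the `λ`-inequality of node `t_{j+1}`:
`t_j ≤ λ_{i_j} + ∑_{k > j} a_k t_k`. -/
def LamIneq (n : ℕ) (w : List ℕ) (lam : ℕ → ℤ) (j : Fin (Dim n)) (t : Fin (Dim n) → ℝ) : Prop :=
  t j ≤ (lam (letterAt w ((j : ℕ) + 1)) : ℝ) +
    ∑ k : Fin (Dim n),
      (if (j : ℕ) < (k : ℕ) then lamCoeff w ((j : ℕ) + 1) ((k : ℕ) + 1) else 0) * t k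

/-- the `λ`-cone `C_i^λ ⊆ ℝ^N`. -/
def lamCone (n : ℕ) (w : List ℕ) (lam : ℕ → ℤ) : Set (Fin (Dim n) → ℝ) :=
  {t | ∀ j, LamIneq n w lam j t}

/-- the polyhedron cut out by all `λ`-inequalities except the one of `j₀`. -/
def lamConeExcept (n : ℕ) (w : List ℕ) (lam : ℕ → ℤ) (j₀ : Fin (Dim n)) :
    Set (Fin (Dim n) → ℝ) :=
  {t | ∀ j, j ≠ j₀ → LamIneq n w lam j t}

/-- the string polytope `Δ_i(λ) = C_i ∩ C_i^λ`. -/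
def stringPolytope (n : ℕ) (w : List ℕ) (lam : ℕ → ℤ) : Set (Fin (Dim n) → ℝ) :=
  stringCone n w ∩ lamCone n w lam

/-- `λ = λ_1 ϖ_1 + ⋯ + λ_n ϖ_n` is a dominant integral weight: all `λ_j ≥ 0`. -/
def Dominant (n : ℕ) (lam : ℕ → ℤ) : Prop := ∀ j, 1 ≤ j → j ≤ n → 0 ≤ lam j

/-- `λ` is a regular dominant integral weight: all `λ_j > 0`. -/
def RegularDominant (n : ℕ) (lam : ℕ → ℤ) : Prop := ∀ j, 1 ≤ j → j ≤ n → 0 < lam j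

/-! ### Unimodular equivalence, Gelfand–Cetlin polytope, facets -/

/-- `P` and `Q` are unimodularly equivalent: `Q = M(P) + v` with `M ∈ GL(m, ℤ)`, `v ∈ ℤ^m`. -/
def UnimodEquiv {m : ℕ} (P Q : Set (Fin m → ℝ)) : Prop :=
  ∃ (M : Matrix (Fin m) (Fin m) ℤ) (v : Fin m → ℤ), IsUnit M.det ∧
    Q = (fun x i => (∑ j, (M i j : ℝ) * x j) + (v i : ℝ)) '' P

/-- the entry `x_{k,j}` (`1 ≤ j ≤ k ≤ n+1`) of a Gelfand–Cetlin pattern, where the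
top row is `x_{n+1,j} = λ_j + ⋯ + λ_n` and `x_{n+1,n+1} = 0`; the pair `(k, j)` is
encoded as the coordinate `k(k-1)/2 + (j-1)` of `ℝ^N`. -/
def gcX (n : ℕ) (lam : ℕ → ℤ) (x : Fin (Dim n) → ℝ) (k j : ℕ) : ℝ :=
  if k = n + 1 then (if j ≤ n then ∑ t ∈ Finset.Icc j n, (lam t : ℝ) else 0)
  else if h : k * (k - 1) / 2 + (j - 1) < Dim n then x ⟨k * (k - 1) / 2 + (j - 1), h⟩ else 0

/-- the Gelfand–Cetlin polytope `GC(λ) ⊆ ℝ^N`. -/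
def GCPolytope (n : ℕ) (lam : ℕ → ℤ) : Set (Fin (Dim n) → ℝ) :=
  {x | ∀ k j, 1 ≤ k → k ≤ n → 1 ≤ j → j ≤ k →
      gcX n lam x k j ≤ gcX n lam x (k + 1) j ∧
      gcX n lam x (k + 1) (j + 1) ≤ gcX n lam x k j}

/-- a face of a convex set: a convex extreme subset. -/
def IsFaceSet {m : ℕ} (S F : Set (Fin m → ℝ)) : Prop := IsExtreme ℝ S F ∧ Convex ℝ F

/-- a facet: a maximal proper face. -/
def IsFacet {m : ℕ} (S F : Set (Fin m → ℝ)) : Prop :=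
  IsFaceSet S F ∧ F ≠ S ∧ ∀ G, IsFaceSet S G → G ≠ S → F ⊆ G → F = G

/-- the number of facets. -/
def numFacets {m : ℕ} (S : Set (Fin m → ℝ)) : ℕ := {F | IsFacet S F}.ncard

/-- combinatorial equivalence: an inclusion-preserving bijection between face lattices. -/
def CombEquiv {m : ℕ} (S T : Set (Fin m → ℝ)) : Prop :=
  ∃ e : {F // IsFaceSet S F} ≃ {F // IsFaceSet T F},
    ∀ F G : {F // IsFaceSet S F}, F.1 ⊆ G.1 ↔ (e F).1 ⊆ (e G).1

/-! ### Indices, contractions and extensions -/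

/-- the `D`-index `ind_D(i) = |i_D^+|` for a decomposition `i ∼ i_D^- D_n i_D^+`
(independent of the decomposition). -/
def indD (n : ℕ) (w : List ℕ) : ℕ :=
  sInf {s | ∃ u v : List ℕ, v.length = s ∧ TwoMoveEquiv w (u ++ descWord n ++ v)}

/-- the `A`-index `ind_A(i) = |i_A^+|` for a decomposition `i ∼ i_A^- A_n i_A^+`. -/
def indA (n : ℕ) (w : List ℕ) : ℕ :=
  sInf {s | ∃ u v : List ℕ, v.length = s ∧ TwoMoveEquiv w (u ++ ascWord n ++ v)}

/-- `w'` is a `D`-contraction `C_D(w) = i_D^- (i_D^+ - 1)` of `w ∈ Σ_{n+1}`. -/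
def IsContractionD (n : ℕ) (w w' : List ℕ) : Prop :=
  ∃ u v : List ℕ, TwoMoveEquiv w (u ++ descWord n ++ v) ∧ w' = u ++ v.map (· - 1)

/-- `w'` is an `A`-contraction `C_A(w) = (i_A^- - 1) i_A^+` of `w ∈ Σ_{n+1}`. -/
def IsContractionA (n : ℕ) (w w' : List ℕ) : Prop :=
  ∃ u v : List ℕ, TwoMoveEquiv w (u ++ ascWord n ++ v) ∧ w' = u.map (· - 1) ++ v

/-- the `D`-extension `E_D(s) : Σ_{n+1} → Σ_{n+2}`,
`i = i^-(s) i^+(s) ↦ i^-(s) D_{n+1} (i^+(s) + 1)` where `|i^+(s)| = s`. -/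
def extD (n : ℕ) (s : ℕ) (w : List ℕ) : List ℕ :=
  w.take (w.length - s) ++ descWord (n + 1) ++ (w.drop (w.length - s)).map (· + 1)

/-- the `A`-extension `E_A(s) : Σ_{n+1} → Σ_{n+2}`,
`i = i^-(s) i^+(s) ↦ (i^-(s) + 1) A_{n+1} i^+(s)`. -/
def extA (n : ℕ) (s : ℕ) (w : List ℕ) : List ℕ :=
  (w.take (w.length - s)).map (· + 1) ++ ascWord (n + 1) ++ w.drop (w.length - s)

/-- there exists `(σ_1, …, σ_n) ∈ {A, D}^n` (here `true = D`, `false = A`) such that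
`ind_{σ_k}(C_{σ_{k+1}} ∘ ⋯ ∘ C_{σ_n}(i)) = 0` for all `k = n, …, 1`. -/
def SimplicialWord (n : ℕ) (w : List ℕ) : Prop :=
  ∃ (σ : ℕ → Bool) (c : ℕ → List ℕ), c n = w ∧
    ∀ k, 1 ≤ k → k ≤ n →
      (if σ k then IsContractionD k (c k) (c (k - 1)) ∧ indD k (c k) = 0
       else IsContractionA k (c k) (c (k - 1)) ∧ indA k (c k) = 0)


/-- the `D`-coindex `coind_D(i) = |i_D^-|`. -/
def coindD (n : ℕ) (w : List ℕ) : ℕ :=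
  sInf {s | ∃ u v : List ℕ, u.length = s ∧ TwoMoveEquiv w (u ++ descWord n ++ v)}

/-- the `A`-coindex `coind_A(i) = |i_A^-|`. -/
def coindA (n : ℕ) (w : List ℕ) : ℕ :=
  sInf {s | ∃ u v : List ℕ, u.length = s ∧ TwoMoveEquiv w (u ++ ascWord n ++ v)}

/-- the `a`-th (0-based) coordinate of a point of `ℝ^N`. -/
def entry (n : ℕ) (t : Fin (Dim n) → ℝ) (a : ℕ) : ℝ :=
  if h : a < Dim n then t ⟨a, h⟩ else 0

/-- the product of cones
`t_1 ≥ 0`, `t_2 ≥ t_3 ≥ 0`, …, `t_{N-n+1} ≥ ⋯ ≥ t_N ≥ 0` (in `ℝ^N`, 1-based: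
for `k = 1, …, n` the chain `t_{k(k-1)/2+1} ≥ ⋯ ≥ t_{k(k-1)/2+k} ≥ 0`). -/
def chainCone (n : ℕ) : Set (Fin (Dim n) → ℝ) :=
  {t | ∀ k j, 1 ≤ k → k ≤ n → 1 ≤ j → j ≤ k →
    (if j = k then 0 else entry n t (k * (k - 1) / 2 + j)) ≤
      entry n t (k * (k - 1) / 2 + (j - 1))}

/-! ### Two-moves: basic invariants -/

theorem TwoMoveStep.symm {w w' : List ℕ} (h : TwoMoveStep w w') : TwoMoveStep w' w := by
  obtain ⟨u, v, a, b, hab, h1, h2⟩ := h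
  exact ⟨u, v, b, a, hab.symm, h2, h1⟩

theorem TwoMoveEquiv.symm {w w' : List ℕ} (h : TwoMoveEquiv w w') : TwoMoveEquiv w' w := by
  induction h with
  | refl => exact Relation.ReflTransGen.refl
  | tail _ h2 ih => exact Relation.ReflTransGen.head h2.symm ih

theorem TwoMoveEquiv.trans {w w' w'' : List ℕ} (h : TwoMoveEquiv w w')
    (h' : TwoMoveEquiv w' w'') : TwoMoveEquiv w w'' :=
  Relation.ReflTransGen.trans h h'

theorem TwoMoveEquiv.append_right {w w' : List ℕ} (h : TwoMoveEquiv w w') (x : List ℕ) :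
    TwoMoveEquiv (w ++ x) (w' ++ x) := by
  induction h with
  | refl => exact Relation.ReflTransGen.refl
  | tail _ h2 ih =>
    refine Relation.ReflTransGen.tail ih ?_
    obtain ⟨u, v, a, b, hab, h1, h2⟩ := h2
    exact ⟨u, v ++ x, a, b, hab, by simp [h1], by simp [h2]⟩

theorem TwoMoveEquiv.map_succ {w w' : List ℕ} (h : TwoMoveEquiv w w') :
    TwoMoveEquiv (w.map (· + 1)) (w'.map (· + 1)) := by
  induction h with
  | refl => exact Relation.ReflTransGen.refl
  | tail _ h2 ih =>
    refine Relation.ReflTransGen.tail ih ?_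
    obtain ⟨u, v, a, b, hab, h1, h2⟩ := h2
    exact ⟨u.map (· + 1), v.map (· + 1), a + 1, b + 1, by omega, by simp [h1], by simp [h2]⟩

theorem TwoMoveEquiv.perm {w w' : List ℕ} (h : TwoMoveEquiv w w') : w.Perm w' := by
  induction h with
  | refl => exact List.Perm.refl _
  | tail _ h2 ih =>
    refine ih.trans ?_
    obtain ⟨u, v, a, b, hab, h1, h2⟩ := h2
    rw [h1, h2]
    exact (List.Perm.swap b a v).append_left u

theorem TwoMoveEquiv.filter_eq {w w' : List ℕ} (h : TwoMoveEquiv w w') (c : ℕ) :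
    w.filter (fun x => decide (x = c ∨ x = c + 1)) =
      w'.filter (fun x => decide (x = c ∨ x = c + 1)) := by
  induction h with
  | refl => rfl
  | tail _ h2 ih =>
    rw [ih]
    obtain ⟨u, v, a, b, hab, h1, h2⟩ := h2
    rw [h1, h2, List.filter_append, List.filter_append]
    congr 1
    simp only [List.filter_cons]
    by_cases ha : a = c ∨ a = c + 1 <;> by_cases hb : b = c ∨ b = c + 1 <;>
      simp only [ha, hb] <;> first | omega | rfl

theorem sTrans_comm {a b : ℕ} (h : a + 1 < b ∨ b + 1 < a) :
    sTrans a * sTrans b = sTrans b * sTrans a := by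
  ext x
  simp only [sTrans, Equiv.Perm.mul_apply, Equiv.swap_apply_def]
  grind

theorem wordProd_append (u v : List ℕ) : wordProd (u ++ v) = wordProd u * wordProd v := by
  simp [wordProd]

theorem wordProd_cons (a : ℕ) (v : List ℕ) : wordProd (a :: v) = sTrans a * wordProd v := by
  simp [wordProd]

theorem wordProd_nil : wordProd [] = 1 := by simp [wordProd]

theorem TwoMoveEquiv.wordProd_eq {w w' : List ℕ} (h : TwoMoveEquiv w w') :
    wordProd w = wordProd w' := by
  induction h with
  | refl => rfl
  | tail _ h2 ih =>
    rw [ih]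
    obtain ⟨u, v, a, b, hab, h1, h2⟩ := h2
    rw [h1, h2]
    simp only [wordProd_append, wordProd_cons]
    rw [← mul_assoc (sTrans a), sTrans_comm hab, mul_assoc]

theorem wordProd_map_succ (w : List ℕ) (x : ℕ) :
    wordProd (w.map (· + 1)) (x + 1) = wordProd w x + 1 := by
  induction w generalizing x with
  | nil => simp [wordProd]
  | cons a w ih =>
    rw [List.map_cons, wordProd_cons, wordProd_cons, Equiv.Perm.mul_apply, ih,
      Equiv.Perm.mul_apply]
    simp only [sTrans, Equiv.swap_apply_def]
    grind

/-! ### Blocks and normal forms -/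

/-- the word `a+m, …, a+1`. -/
def descB (a m : ℕ) : List ℕ := (List.range m).map (fun i => a + m - i)

/-- the word `a+1, …, a+m`. -/
def ascB (a m : ℕ) : List ℕ := (List.range m).map (fun i => a + 1 + i)

/-- normal form word on columns `a+1, …, a+σ.length`. -/
def nf : ℕ → List Bool → List ℕ
  | _, [] => []
  | a, true :: σ => nf a σ ++ descB a (σ.length + 1)
  | a, false :: σ => nf (a + 1) σ ++ ascB a (σ.length + 1)

theorem descB_length (a m : ℕ) : (descB a m).length = m := by simp [descB]
theorem ascB_length (a m : ℕ) : (ascB a m).length = m := by simp [ascB]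

theorem ascWord_eq (n : ℕ) : ascWord n = ascB 0 n := by
  simp [ascWord, ascB, add_comm]

theorem descWord_eq (n : ℕ) : descWord n = descB 0 n := by
  apply List.ext_getElem
  · simp [descWord, ascWord, descB]
  · intro i h1 h2
    simp [descWord, ascWord, descB] at h1 ⊢
    omega

theorem descB_succ (a m : ℕ) : descB a (m + 1) = (a + m + 1) :: descB a m := by
  apply List.ext_getElem
  · simp [descB]
  · intro i h1 h2
    cases i with
    | zero => simp [descB]; omega
    | succ i => simp [descB]; omega

theorem descB_succ' (a m : ℕ) : descB a (m + 1) = descB (a + 1) m ++ [a + 1] := by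
  apply List.ext_getElem
  · simp [descB]
  · intro i h1 h2
    simp only [descB_length] at h1
    rcases Nat.lt_succ_iff_lt_or_eq.1 h1 with h | h
    · rw [List.getElem_append_left (by simpa [descB] using h)]
      simp [descB]; omega
    · subst h
      rw [List.getElem_append_right (by simp [descB])]
      simp [descB]; omega

theorem ascB_succ (a m : ℕ) : ascB a (m + 1) = ascB a m ++ [a + m + 1] := by
  simp [ascB, List.range_succ]; omega

theorem ascB_succ' (a m : ℕ) : ascB a (m + 1) = (a + 1) :: ascB (a + 1) m := by
  apply List.ext_getElem
  · simp [ascB]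
  · intro i h1 h2
    cases i with
    | zero => simp [ascB]
    | succ i => simp [ascB]; omega

theorem nf_map_succ (a : ℕ) (σ : List Bool) : (nf a σ).map (· + 1) = nf (a + 1) σ := by
  induction σ generalizing a with
  | nil => simp [nf]
  | cons b σ ih =>
    cases b
    · simp only [nf, List.map_append, ih]
      congr 1
      simp [ascB]; omega
    · simp only [nf, List.map_append, ih]
      congr 1
      simp [descB]; omega

theorem wordProd_descB (a m x : ℕ) : wordProd (descB a m) x =
    if x = a + 1 then a + m + 1 else if a + 1 < x ∧ x ≤ a + m + 1 then x - 1 else x := by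
  induction m generalizing x with
  | zero => simp [descB, wordProd_nil]; grind
  | succ m ih =>
    rw [descB_succ, wordProd_cons, Equiv.Perm.mul_apply, ih]
    simp only [sTrans, Equiv.swap_apply_def]
    grind

theorem wordProd_ascB (a m x : ℕ) : wordProd (ascB a m) x =
    if x = a + m + 1 then a + 1 else if a + 1 ≤ x ∧ x ≤ a + m then x + 1 else x := by
  induction m generalizing x with
  | zero => simp [ascB, wordProd_nil]; grind
  | succ m ih =>
    rw [ascB_succ, wordProd_append, wordProd_cons, wordProd_nil, Equiv.Perm.mul_apply, ih]
    simp only [sTrans, Equiv.swap_apply_def, mul_one]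
    grind

theorem wordProd_nf (a : ℕ) (σ : List Bool) (x : ℕ) : wordProd (nf a σ) x =
    if a + 1 ≤ x ∧ x ≤ a + σ.length + 1 then 2 * a + σ.length + 2 - x else x := by
  induction σ generalizing a x with
  | nil => simp [nf, wordProd_nil]; grind
  | cons b σ ih =>
    cases b
    · simp only [nf, wordProd_append, Equiv.Perm.mul_apply, ih, wordProd_ascB, List.length_cons]
      grind
    · simp only [nf, wordProd_append, Equiv.Perm.mul_apply, ih, wordProd_descB, List.length_cons]
      grind

/-! ### Reduction to a normal form -/

theorem letterAt_append_left {u v : List ℕ} {j : ℕ} (h1 : 1 ≤ j) (h2 : j ≤ u.length) :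
    letterAt (u ++ v) j = letterAt u j := by
  unfold letterAt
  rw [List.getD_append _ _ _ _ (by omega)]

theorem letterAt_append_right {u v : List ℕ} {i : ℕ} (h1 : 1 ≤ i) :
    letterAt (u ++ v) (u.length + i) = letterAt v i := by
  unfold letterAt
  rw [List.getD_append_right _ _ _ _ (by omega)]
  congr 1; omega

theorem stateAbove_append_left {u v : List ℕ} {j : ℕ} (h2 : j ≤ u.length + 1) :
    stateAbove (u ++ v) j = stateAbove u j := by
  unfold stateAbove
  rw [List.take_append_of_le_length (by omega)]

theorem stateAbove_append_right {u v : List ℕ} {i : ℕ} (h1 : 1 ≤ i) :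
    stateAbove (u ++ v) (u.length + i) = wordProd u * stateAbove v i := by
  unfold stateAbove
  rw [← wordProd_append]
  congr 1
  rw [show u.length + i - 1 = u.length + (i - 1) by omega, List.take_length_add_append]

theorem wireX_append_left {u v : List ℕ} {j : ℕ} (h1 : 1 ≤ j) (h2 : j ≤ u.length) :
    wireX (u ++ v) j = wireX u j := by
  unfold wireX
  rw [letterAt_append_left h1 h2, stateAbove_append_left (by omega)]

theorem wireY_append_left {u v : List ℕ} {j : ℕ} (h1 : 1 ≤ j) (h2 : j ≤ u.length) :
    wireY (u ++ v) j = wireY u j := by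
  unfold wireY
  rw [letterAt_append_left h1 h2, stateAbove_append_left (by omega)]

theorem wireX_append_right {u v : List ℕ} {i : ℕ} (h1 : 1 ≤ i) :
    wireX (u ++ v) (u.length + i) = wordProd u (wireX v i) := by
  unfold wireX
  rw [letterAt_append_right h1, stateAbove_append_right h1]; rfl

theorem wireY_append_right {u v : List ℕ} {i : ℕ} (h1 : 1 ≤ i) :
    wireY (u ++ v) (u.length + i) = wordProd u (wireY v i) := by
  unfold wireY
  rw [letterAt_append_right h1, stateAbove_append_right h1]; rfl

/-- two wires that are in inverted order at the bottom cross somewhere. -/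
theorem exists_crossing (u : List ℕ) (r s : ℕ) (hrs : r < s)
    (h : (wordProd u).symm s < (wordProd u).symm r) :
    ∃ j, 1 ≤ j ∧ j ≤ u.length ∧ wireX u j = r ∧ wireY u j = s := by
  induction u using List.reverseRecOn with
  | nil =>
    rw [wordProd_nil] at h
    exact absurd (show s < r from h) (by omega)
  | append_singleton u c ih =>
    by_cases h' : (wordProd u).symm s < (wordProd u).symm r
    · obtain ⟨j, h1, h2, h3, h4⟩ := ih h'
      refine ⟨j, h1, by simp; omega, ?_, ?_⟩
      · rw [wireX_append_left h1 h2, h3]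
      · rw [wireY_append_left h1 h2, h4]
    · refine ⟨u.length + 1, by omega, by simp, ?_, ?_⟩
      all_goals
        have hne : (wordProd u).symm s ≠ (wordProd u).symm r := by
          intro hh; exact hrs.ne' ((wordProd u).symm.injective hh)
        rw [wordProd_append, wordProd_cons, wordProd_nil, mul_one] at h
        have e : ∀ x, (wordProd u * sTrans c).symm x = sTrans c ((wordProd u).symm x) := by
          intro x
          rw [Equiv.symm_apply_eq]
          simp [Equiv.Perm.mul_apply, sTrans]
        rw [e, e] at h
        have key : (wordProd u).symm r = c ∧ (wordProd u).symm s = c + 1 := by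
          simp only [sTrans, Equiv.swap_apply_def] at h
          grind
        obtain ⟨k1, k2⟩ := key
      · rw [wireX_append_right le_rfl]
        simp [wireX, stateAbove, letterAt, wordProd_nil, ← k1]
      · rw [wireY_append_right le_rfl]
        simp [wireY, stateAbove, letterAt, wordProd_nil, ← k2]

theorem letters_of_reversing (u : List ℕ) (a m : ℕ) (hlen : u.length = m * (m - 1) / 2)
    (hrev : ∀ x, a + 1 ≤ x → x ≤ a + m → wordProd u x = 2 * a + m + 1 - x) :
    ∀ c ∈ u, a + 1 ≤ c ∧ c + 1 ≤ a + m := by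
  set P : Finset (ℕ × ℕ) := ((Finset.range m).sigma (fun i => Finset.range i)).image
    (fun p => (a + 1 + p.2, a + 1 + p.1)) with hP
  have hPcard : P.card = m * (m - 1) / 2 := by
    rw [hP, Finset.card_image_of_injective, Finset.card_sigma]
    · simp [Finset.sum_range_id]
    · rintro ⟨i, j⟩ ⟨i', j'⟩ h
      simp at h
      obtain ⟨h1, h2⟩ := h
      subst h1; subst h2; rfl
  set Q : Finset (ℕ × ℕ) := (Finset.Icc 1 u.length).image (fun j => (wireX u j, wireY u j)) with hQ
  have hsub : P ⊆ Q := by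
    rintro ⟨r, s⟩ h
    rw [hP, Finset.mem_image] at h
    obtain ⟨⟨i, j⟩, h1, h2⟩ := h
    simp at h1 h2
    obtain ⟨rfl, rfl⟩ := h2
    have e : ∀ x, a + 1 ≤ x → x ≤ a + m → (wordProd u).symm x = 2 * a + m + 1 - x := by
      intro x hx1 hx2
      rw [Equiv.symm_apply_eq, hrev _ (by omega) (by omega)]; omega
    obtain ⟨k, hk1, hk2, hk3, hk4⟩ := exists_crossing u (a + 1 + j) (a + 1 + i) (by omega)
      (by rw [e _ (by omega) (by omega), e _ (by omega) (by omega)]; omega)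
    rw [hQ, Finset.mem_image]
    exact ⟨k, by simp; omega, by simp [hk3, hk4]⟩
  have hcard : Q.card ≤ P.card := by
    rw [hPcard, ← hlen]
    calc Q.card ≤ (Finset.Icc 1 u.length).card := Finset.card_image_le
      _ = u.length := by simp
  have hEq := Finset.eq_of_subset_of_card_le hsub hcard
  have hwires : ∀ j, 1 ≤ j → j ≤ u.length → (a + 1 ≤ wireX u j ∧ wireX u j ≤ a + m) ∧
      (a + 1 ≤ wireY u j ∧ wireY u j ≤ a + m) := by
    intro j h1 h2
    have : (wireX u j, wireY u j) ∈ P := by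
      rw [hEq, hQ, Finset.mem_image]
      exact ⟨j, by simp; omega, rfl⟩
    rw [hP, Finset.mem_image] at this
    obtain ⟨⟨i, k⟩, h3, h4⟩ := this
    simp at h3 h4
    omega
  have hfix : ∀ j, j ≤ u.length → ∀ x, ¬ (a + 1 ≤ x ∧ x ≤ a + m) →
      wordProd (u.take j) x = x := by
    intro j
    induction j with
    | zero => intro _ x _; simp [wordProd_nil]
    | succ j ih =>
      intro hj x hx
      have ih' := ih (by omega)
      have hw := hwires (j + 1) (by omega) hj
      rw [List.take_add_one, wordProd_append, Equiv.Perm.mul_apply]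
      have : u[j]?.toList = [letterAt u (j + 1)] := by
        simp [letterAt, List.getElem?_eq_getElem (show j < u.length by omega),
          List.getD_eq_getElem?_getD]
      rw [this, wordProd_cons, wordProd_nil, mul_one]
      simp only [wireX, wireY, stateAbove, Nat.add_sub_cancel] at hw
      set c := letterAt u (j + 1)
      have hc1 : a + 1 ≤ c ∧ c ≤ a + m := by
        by_contra hcon
        rw [ih' _ hcon] at hw; omega
      have hc2 : a + 1 ≤ c + 1 ∧ c + 1 ≤ a + m := by
        by_contra hcon
        rw [ih' _ hcon] at hw; omega
      have : sTrans c x = x := by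
        simp only [sTrans, Equiv.swap_apply_def]
        grind
      rw [this, ih' _ hx]
  intro c hc
  obtain ⟨j, hj, rfl⟩ := List.getElem_of_mem hc
  have hw := hwires (j + 1) (by omega) hj
  have hl : letterAt u (j + 1) = u[j] := by
    simp [letterAt, List.getD_eq_getElem?_getD, List.getElem?_eq_getElem hj]
  simp only [wireX, wireY, stateAbove, Nat.add_sub_cancel, hl] at hw
  have hf := hfix j (by omega)
  constructor
  · by_contra hcon
    rw [hf (u[j]) (by omega)] at hw; omega
  · by_contra hcon
    rw [hf (u[j] + 1) (by omega)] at hw; omega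

theorem tail_nil_aux {p q : ℕ} (hpq : p ≠ q) (L1 L2 R : List ℕ) (hR : ∀ x ∈ R, x = q)
    (h : L1 ++ [p, q] = L2 ++ [p, q] ++ R) : R = [] := by
  have h' := congrArg List.reverse h
  simp only [List.reverse_append] at h'
  rw [← List.reverse_eq_nil_iff]
  have hR' : ∀ x ∈ R.reverse, x = q := by simpa using hR
  match hRR : R.reverse with
  | [] => rfl
  | [x] => rw [hRR] at h' hR'; simp at h' hR'; omega
  | x :: y :: l => rw [hRR] at h' hR'; simp at h' hR'; omega

theorem filter_descB (n c : ℕ) (h1 : 1 ≤ c) (h2 : c < n) :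
    (descB 0 n).filter (fun x => decide (x = c ∨ x = c + 1)) = [c + 1, c] := by
  induction n with
  | zero => omega
  | succ n ih =>
    rw [descB_succ, List.filter_cons]
    by_cases h : c = n
    · subst h
      obtain ⟨d, rfl⟩ : ∃ d, c = d + 1 := ⟨c - 1, by omega⟩
      simp [descB_succ]
      intro x hx
      simp [descB] at hx
      omega
    · rw [ih (by omega)]
      simp; omega

theorem filter_ascB (n c : ℕ) (h1 : 1 ≤ c) (h2 : c < n) :
    (ascB 0 n).filter (fun x => decide (x = c ∨ x = c + 1)) = [c, c + 1] := by
  induction n with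
  | zero => omega
  | succ n ih =>
    rw [ascB_succ, List.filter_append]
    by_cases h : c = n
    · subst h
      obtain ⟨d, rfl⟩ : ∃ d, c = d + 1 := ⟨c - 1, by omega⟩
      simp [ascB_succ]
      intro x hx
      simp [ascB] at hx
      omega
    · rw [ih (by omega)]
      simp; omega

theorem desc_tail_nil {n : ℕ} {u u' v' : List ℕ}
    (h : TwoMoveEquiv (u ++ descB 0 n) (u' ++ descB 0 n ++ v'))
    (hu : n ∉ u) (hv : ∀ x ∈ v', 1 ≤ x ∧ x ≤ n) : v' = [] := by
  have key : ∀ d, d < n → n - d ∉ v' := by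
    intro d
    induction d with
    | zero =>
      intro _ hmem
      have hc := h.perm.count_eq n
      simp only [List.count_append] at hc
      have h1 : 1 ≤ List.count n v' := List.count_pos_iff.2 (by simpa using hmem)
      rw [List.count_eq_zero_of_not_mem hu] at hc
      omega
    | succ d ih =>
      intro hd hmem
      have ih' := ih (by omega)
      set c := n - (d + 1) with hc
      have hc1 : n - d = c + 1 := by omega
      rw [hc1] at ih'
      have hf := h.filter_eq c
      simp only [List.filter_append] at hf
      rw [filter_descB n c (by omega) (by omega)] at hf
      have hnil := tail_nil_aux (by omega) _ _ _ (by
        intro x hx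
        simp only [List.mem_filter, decide_eq_true_eq] at hx
        rcases hx.2 with h3 | h3
        · exact h3
        · rw [h3] at hx; exact absurd hx.1 ih') hf
      have : c ∈ v'.filter (fun x => decide (x = c ∨ x = c + 1)) := by simp [hmem]
      rw [hnil] at this
      simp at this
  rw [List.eq_nil_iff_forall_not_mem]
  intro x hx
  have := hv x hx
  apply key (n - x) (by omega)
  rwa [show n - (n - x) = x by omega]

theorem asc_tail_nil {n : ℕ} {u u' v' : List ℕ}
    (h : TwoMoveEquiv (u ++ ascB 0 n) (u' ++ ascB 0 n ++ v'))
    (hu : 1 ∉ u) (hv : ∀ x ∈ v', 1 ≤ x ∧ x ≤ n) : v' = [] := by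
  have key : ∀ d, d < n → d + 1 ∉ v' := by
    intro d
    induction d with
    | zero =>
      intro _ hmem
      have hc := h.perm.count_eq 1
      simp only [List.count_append] at hc
      have h1 : 1 ≤ List.count 1 v' := List.count_pos_iff.2 (by simpa using hmem)
      rw [List.count_eq_zero_of_not_mem hu] at hc
      omega
    | succ d ih =>
      intro hd hmem
      have ih' := ih (by omega)
      have hf := h.filter_eq (d + 1)
      simp only [List.filter_append] at hf
      rw [filter_ascB n (d + 1) (by omega) (by omega)] at hf
      have hnil := tail_nil_aux (by omega) _ _ _ (by
        intro x hx
        simp only [List.mem_filter, decide_eq_true_eq] at hx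
        rcases hx.2 with h3 | h3
        · rw [h3] at hx; exact absurd hx.1 ih'
        · exact h3) hf
      have : d + 1 + 1 ∈ v'.filter (fun x => decide (x = d + 1 ∨ x = d + 1 + 1)) := by simp [hmem]
      rw [hnil] at this
      simp at this
  rw [List.eq_nil_iff_forall_not_mem]
  intro x hx
  have := hv x hx
  apply key (x - 1) (by omega)
  rwa [show (x - 1) + 1 = x by omega]

/-- weak form of reducedness. -/
def Red (a n : ℕ) (w : List ℕ) : Prop :=
  w.length = n * (n + 1) / 2 ∧
    ∀ x, a + 1 ≤ x → x ≤ a + n + 1 → wordProd w x = 2 * a + n + 2 - x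

theorem Red.letters {a n : ℕ} {w : List ℕ} (h : Red a n w) :
    ∀ c ∈ w, a + 1 ≤ c ∧ c ≤ a + n := by
  intro c hc
  have := letters_of_reversing w a (n + 1) (by rw [h.1]; simp [Nat.mul_comm])
    (by intro x h1 h2; rw [h.2 x h1 (by omega)]; omega) c hc
  omega

theorem Red.congr {a n : ℕ} {w w' : List ℕ} (h : Red a n w) (e : TwoMoveEquiv w w') :
    Red a n w' := by
  refine ⟨?_, ?_⟩
  · rw [← e.perm.length_eq, h.1]
  · rw [← e.wordProd_eq]; exact h.2

theorem dim_succ (n : ℕ) : (n + 1) * (n + 1 + 1) / 2 = n * (n + 1) / 2 + (n + 1) := by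
  rw [show (n + 1) * (n + 1 + 1) = n * (n + 1) + (n + 1) * 2 by ring,
    Nat.add_mul_div_right _ _ (by norm_num)]

theorem Red.desc {n : ℕ} {u : List ℕ} (h : Red 0 (n + 1) (u ++ descB 0 (n + 1))) : Red 0 n u := by
  refine ⟨?_, ?_⟩
  · have := h.1
    rw [List.length_append, descB_length, dim_succ] at this
    omega
  · intro x h1 h2
    have := h.2 (x + 1) (by omega) (by omega)
    rw [wordProd_append, Equiv.Perm.mul_apply, wordProd_descB, if_neg (by omega),
      if_pos (by omega)] at this
    simp only [Nat.add_sub_cancel] at this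
    rw [this]; omega

theorem Red.asc {n : ℕ} {u : List ℕ} (h : Red 0 (n + 1) (u ++ ascB 0 (n + 1))) : Red 1 n u := by
  refine ⟨?_, ?_⟩
  · have := h.1
    rw [List.length_append, ascB_length, dim_succ] at this
    omega
  · intro x h1 h2
    have := h.2 (x - 1) (by omega) (by omega)
    rw [wordProd_append, Equiv.Perm.mul_apply, wordProd_ascB, if_neg (by omega),
      if_pos (by omega), show x - 1 + 1 = x by omega] at this
    rw [this]; omega

theorem exists_nf (σ : ℕ → Bool) (c : ℕ → List ℕ) (n : ℕ) (hred : Red 0 n (c n))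
    (hc : ∀ k, 1 ≤ k → k ≤ n →
      (if σ k then IsContractionD k (c k) (c (k - 1)) ∧ indD k (c k) = 0
       else IsContractionA k (c k) (c (k - 1)) ∧ indA k (c k) = 0)) :
    ∃ τ : List Bool, τ.length = n ∧ TwoMoveEquiv (c n) (nf 0 τ) := by
  induction n with
  | zero =>
    refine ⟨[], rfl, ?_⟩
    have : c 0 = [] := by
      have := hred.1
      simpa using this
    rw [this]; exact Relation.ReflTransGen.refl
  | succ n ih =>
    have hk := hc (n + 1) (by omega) le_rfl
    have ih' := fun hr => ih hr (fun k h1 h2 => hc k h1 (by omega))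
    cases hσ : σ (n + 1) with
    | true =>
      rw [hσ, if_pos rfl] at hk
      obtain ⟨⟨u', v', he, hw'⟩, hind⟩ := hk
      simp only [Nat.add_sub_cancel] at hw'
      have hind' : ∃ u v : List ℕ, v.length = 0 ∧
          TwoMoveEquiv (c (n + 1)) (u ++ descWord (n + 1) ++ v) := by
        have hne : {s | ∃ u v : List ℕ, v.length = s ∧
          TwoMoveEquiv (c (n + 1)) (u ++ descWord (n + 1) ++ v)}.Nonempty := ⟨_, u', v', rfl, he⟩
        have := Nat.sInf_mem hne
        unfold indD at hind
        rw [hind] at this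
        exact this
      obtain ⟨u, v, hv, hu⟩ := hind'
      rw [List.length_eq_zero_iff] at hv
      subst hv
      rw [List.append_nil, descWord_eq] at hu
      rw [descWord_eq] at he
      have hr := (hred.congr hu).desc
      have hl := (hred.congr he).letters
      have hv' : v' = [] := by
        refine desc_tail_nil (hu.symm.trans he) ?_ ?_
        · intro hm; have := hr.letters _ hm; omega
        · intro x hx
          have := hl x (by simp [hx])
          omega
      subst hv'
      simp only [List.map_nil, List.append_nil] at hw' he
      rw [← hw'] at he
      obtain ⟨τ, h1, h2⟩ := ih' ((hred.congr he).desc)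
      refine ⟨true :: τ, by simp [h1], ?_⟩
      simp only [nf, h1]
      exact he.trans (h2.append_right _)
    | false =>
      rw [hσ, if_neg (by simp)] at hk
      obtain ⟨⟨u', v', he, hw'⟩, hind⟩ := hk
      simp only [Nat.add_sub_cancel] at hw'
      have hind' : ∃ u v : List ℕ, v.length = 0 ∧
          TwoMoveEquiv (c (n + 1)) (u ++ ascWord (n + 1) ++ v) := by
        have hne : {s | ∃ u v : List ℕ, v.length = s ∧
          TwoMoveEquiv (c (n + 1)) (u ++ ascWord (n + 1) ++ v)}.Nonempty := ⟨_, u', v', rfl, he⟩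
        have := Nat.sInf_mem hne
        unfold indA at hind
        rw [hind] at this
        exact this
      obtain ⟨u, v, hv, hu⟩ := hind'
      rw [List.length_eq_zero_iff] at hv
      subst hv
      rw [List.append_nil, ascWord_eq] at hu
      rw [ascWord_eq] at he
      have hr := (hred.congr hu).asc
      have hl := (hred.congr he).letters
      have hv' : v' = [] := by
        refine asc_tail_nil (hu.symm.trans he) ?_ ?_
        · intro hm; have := hr.letters _ hm; omega
        · intro x hx
          have := hl x (by simp [hx])
          omega
      subst hv'
      simp only [List.append_nil] at hw' he
      have hu' : u' = (c n).map (· + 1) := by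
        rw [hw', List.map_map]
        symm
        rw [List.map_congr_left (g := id), List.map_id]
        intro x hx
        have := hl x (by simp [hx])
        simp; omega
      have hr' := (hred.congr he).asc
      rw [hu'] at he hr'
      have hr'' : Red 0 n (c n) := by
        refine ⟨by simpa using hr'.1, ?_⟩
        intro x h1 h2
        have := hr'.2 (x + 1) (by omega) (by omega)
        rw [wordProd_map_succ] at this
        omega
      obtain ⟨τ, h1, h2⟩ := ih' hr''
      refine ⟨false :: τ, by simp [h1], ?_⟩
      simp only [nf, h1]
      refine he.trans ?_
      have := h2.map_succ.append_right (ascB 0 (n + 1))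
      rwa [nf_map_succ] at this

/-! ### Path values -/

/-- the part of `IsGPPath` concerning legality of travel. -/
def PathOK (w : List ℕ) (k : ℕ) : List ℕ → Prop
  | [] => False
  | m :: rest => ValidNode w m ∧ NodeOnWire w m k ∧
       (∀ j ∈ tailList w k m, ¬ Forbidden w k j k) ∧
       TravelOK w k (otherWire w m k) m rest

theorem isGPPath_iff (n : ℕ) (w : List ℕ) (k : ℕ) (ms : List ℕ) :
    IsGPPath n w k ms ↔ 1 ≤ k ∧ k ≤ n ∧ PathOK w k ms ∧ (visitList w k ms).Nodup := by
  cases ms <;> exact Iff.rfl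

/-- the value of the string inequality of a path. -/
def pathVal (w : List ℕ) : ℕ → List ℕ → (ℕ → ℝ) → ℝ
  | _, [], _ => 0
  | r, m :: ms, T => (if r < otherWire w m r then 1 else -1) * T m +
      pathVal w (otherWire w m r) ms T

theorem travelOK_valid {w : List ℕ} {k : ℕ} : ∀ {r a : ℕ} {ms : List ℕ},
    TravelOK w k r a ms → ∀ m ∈ ms, ValidNode w m
  | _, _, [], _ => by simp
  | r, a, m :: ms, h => by
    intro x hx
    rcases List.mem_cons.1 hx with rfl | hx
    · exact h.1
    · exact travelOK_valid h.2.2.2.2 x hx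

theorem pathOK_valid {w : List ℕ} {k : ℕ} {ms : List ℕ} (h : PathOK w k ms) :
    ∀ m ∈ ms, ValidNode w m := by
  cases ms with
  | nil => simp
  | cons m ms =>
    intro x hx
    rcases List.mem_cons.1 hx with rfl | hx
    · exact h.1
    · exact travelOK_valid h.2.2.2 x hx

theorem sum_coeff (n : ℕ) (w : List ℕ) (t : Fin (Dim n) → ℝ) :
    ∀ (r : ℕ) (ms : List ℕ), (∀ m ∈ ms, 1 ≤ m) →
    ∑ j : Fin (Dim n), coeff w r ms ((j : ℕ) + 1) * t j =
      pathVal w r ms (fun m => entry n t (m - 1))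
  | r, [], _ => by simp [coeff, pathSwitches, pathVal]
  | r, m :: ms, h => by
    have ih := sum_coeff n w t (otherWire w m r) ms (fun x hx => h x (by simp [hx]))
    have hm := h m (by simp)
    simp only [coeff] at ih
    simp only [coeff, pathSwitches, pathVal, List.map_cons, List.sum_cons, add_mul,
      Finset.sum_add_distrib]
    rw [ih]
    congr 1
    unfold entry
    by_cases hd : m - 1 < Dim n
    · rw [dif_pos hd, Finset.sum_eq_single (⟨m - 1, hd⟩ : Fin (Dim n))]
      · rw [if_pos (by simp; omega)]
      · intro b _ hb
        rw [if_neg, zero_mul]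
        intro hh
        apply hb
        ext; simp; omega
      · simp
    · rw [dif_neg hd, mul_zero]
      apply Finset.sum_eq_zero
      intro b _
      rw [if_neg, zero_mul]
      have := b.2
      omega

theorem stringIneq_eq (n : ℕ) (w : List ℕ) (k : ℕ) (ms : List ℕ) (h : PathOK w k ms)
    (t : Fin (Dim n) → ℝ) :
    stringIneq n w (k, ms) t = pathVal w k ms (fun m => entry n t (m - 1)) :=
  sum_coeff n w t k ms (fun m hm => (pathOK_valid h m hm).1)

theorem mem_stringCone_iff (n : ℕ) (w : List ℕ) (t : Fin (Dim n) → ℝ) :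
    t ∈ stringCone n w ↔ ∀ k ms, 1 ≤ k → k ≤ n → PathOK w k ms → (visitList w k ms).Nodup →
      0 ≤ pathVal w k ms (fun m => entry n t (m - 1)) := by
  constructor
  · intro h k ms h1 h2 h3 h4
    rw [← stringIneq_eq n w k ms h3]
    exact h (k, ms) ((isGPPath_iff n w k ms).2 ⟨h1, h2, h3, h4⟩)
  · rintro h ⟨k, ms⟩ hp
    obtain ⟨h1, h2, h3, h4⟩ := (isGPPath_iff n w k ms).1 hp
    rw [stringIneq_eq n w k ms h3]
    exact h k ms h1 h2 h3 h4

theorem mem_nodesOn {w : List ℕ} {r j : ℕ} :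
    j ∈ nodesOn w r ↔ ValidNode w j ∧ NodeOnWire w j r := by
  simp only [nodesOn, List.mem_filter, List.mem_map, List.mem_range, decide_eq_true_eq, ValidNode]
  constructor
  · rintro ⟨⟨x, hx, rfl⟩, h⟩
    exact ⟨⟨by omega, by omega⟩, h⟩
  · rintro ⟨⟨h1, h2⟩, h⟩
    exact ⟨⟨j - 1, by omega, by omega⟩, h⟩

theorem mem_segList {w : List ℕ} {r a b j : ℕ} :
    j ∈ segList w r a b ↔ ValidNode w j ∧ NodeOnWire w j r ∧ min a b < j ∧ j < max a b := by
  simp only [segList, List.mem_filter, mem_nodesOn, decide_eq_true_eq]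
  tauto

theorem mem_tailList {w : List ℕ} {r a j : ℕ} :
    j ∈ tailList w r a ↔ ValidNode w j ∧ NodeOnWire w j r ∧ a < j := by
  simp only [tailList, List.mem_filter, mem_nodesOn, decide_eq_true_eq]
  tauto

theorem nodesOn_nodup (w : List ℕ) (r : ℕ) : (nodesOn w r).Nodup := by
  unfold nodesOn
  apply List.Nodup.filter
  exact List.Nodup.map (fun a b h => by simpa using h) List.nodup_range

theorem segList_nodup (w : List ℕ) (r a b : ℕ) : (segList w r a b).Nodup :=
  (nodesOn_nodup w r).filter _

theorem tailList_nodup (w : List ℕ) (r a : ℕ) : (tailList w r a).Nodup :=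
  (nodesOn_nodup w r).filter _

theorem nodeOn_other {w : List ℕ} {j r : ℕ} (h : NodeOnWire w j r) :
    NodeOnWire w j (otherWire w j r) := by
  unfold NodeOnWire otherWire at *
  split_ifs <;> simp

/-! ### Isomorphisms of wiring diagrams -/

/-- a relabelling of nodes respecting the wires and the order along wires. -/
structure WIso (w w' : List ℕ) (p : Equiv.Perm ℕ) : Prop where
  valid : ∀ j, ValidNode w' (p j) ↔ ValidNode w j
  wx : ∀ j, ValidNode w j → wireX w' (p j) = wireX w j
  wy : ∀ j, ValidNode w j → wireY w' (p j) = wireY w j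
  ord : ∀ j j' r, ValidNode w j → ValidNode w j' → NodeOnWire w j r → NodeOnWire w j' r →
    j < j' → p j < p j'

section
variable {w w' : List ℕ} {p : Equiv.Perm ℕ}

theorem WIso.nodeOn (H : WIso w w' p) {j r : ℕ} (hj : ValidNode w j) :
    NodeOnWire w' (p j) r ↔ NodeOnWire w j r := by
  unfold NodeOnWire; rw [H.wx j hj, H.wy j hj]

theorem WIso.other (H : WIso w w' p) {j r : ℕ} (hj : ValidNode w j) :
    otherWire w' (p j) r = otherWire w j r := by
  unfold otherWire; rw [H.wx j hj, H.wy j hj]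

theorem WIso.forb (H : WIso w w' p) {k j r : ℕ} (hj : ValidNode w j) :
    Forbidden w' k (p j) r ↔ Forbidden w k j r := by
  unfold Forbidden; rw [H.other hj]

theorem WIso.ord_iff (H : WIso w w' p) {j j' r : ℕ} (h1 : ValidNode w j) (h2 : ValidNode w j')
    (h3 : NodeOnWire w j r) (h4 : NodeOnWire w j' r) : p j < p j' ↔ j < j' := by
  constructor
  · intro h
    rcases lt_trichotomy j j' with hl | he | hg
    · exact hl
    · subst he; omega
    · have := H.ord j' j r h2 h1 h4 h3 hg; omega
  · exact H.ord j j' r h1 h2 h3 h4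

theorem WIso.mem_tail (H : WIso w w' p) {r a j : ℕ} (ha : ValidNode w a) (hra : NodeOnWire w a r) :
    p j ∈ tailList w' r (p a) ↔ j ∈ tailList w r a := by
  rw [mem_tailList, mem_tailList, H.valid]
  constructor
  · rintro ⟨h1, h2, h3⟩
    rw [H.nodeOn h1] at h2
    exact ⟨h1, h2, (H.ord_iff ha h1 hra h2).1 h3⟩
  · rintro ⟨h1, h2, h3⟩
    exact ⟨h1, (H.nodeOn h1).2 h2, (H.ord_iff ha h1 hra h2).2 h3⟩

theorem WIso.mem_seg (H : WIso w w' p) {r a b j : ℕ} (ha : ValidNode w a) (hra : NodeOnWire w a r)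
    (hb : ValidNode w b) (hrb : NodeOnWire w b r) :
    p j ∈ segList w' r (p a) (p b) ↔ j ∈ segList w r a b := by
  rw [mem_segList, mem_segList, H.valid]
  have key : ∀ h1 : ValidNode w j, NodeOnWire w j r →
      ((min (p a) (p b) < p j ∧ p j < max (p a) (p b)) ↔ (min a b < j ∧ j < max a b)) := by
    intro h1 h2
    rw [min_lt_iff, min_lt_iff, lt_max_iff, lt_max_iff, H.ord_iff ha h1 hra h2,
      H.ord_iff hb h1 hrb h2, H.ord_iff h1 ha h2 hra, H.ord_iff h1 hb h2 hrb]
  constructor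
  · rintro ⟨h1, h2, h3⟩
    rw [H.nodeOn h1] at h2
    exact ⟨h1, h2, (key h1 h2).1 h3⟩
  · rintro ⟨h1, h2, h3⟩
    exact ⟨h1, (H.nodeOn h1).2 h2, (key h1 h2).2 h3⟩

theorem WIso.travel (H : WIso w w' p) {k : ℕ} : ∀ {r a : ℕ} {ms : List ℕ}, ValidNode w a → NodeOnWire w a r →
    TravelOK w k r a ms → TravelOK w' k r (p a) (ms.map p)
  | r, a, [], ha, hra, h => by
    refine ⟨h.1, ?_⟩
    intro j hj
    obtain ⟨j, rfl⟩ := p.surjective j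
    rw [H.mem_tail ha hra] at hj
    rw [H.forb (mem_tailList.1 hj).1]
    exact h.2 j hj
  | r, a, m :: ms, ha, hra, h => by
    obtain ⟨h1, h2, h3, h4, h5⟩ := h
    refine ⟨(H.valid m).2 h1, (H.nodeOn h1).2 h2, ?_, ?_, ?_⟩
    · split_ifs at h3 ⊢ with hk
      · exact (H.ord_iff h1 ha h2 hra).2 h3
      · exact (H.ord_iff ha h1 hra h2).2 h3
    · intro j hj
      obtain ⟨j, rfl⟩ := p.surjective j
      rw [H.mem_seg ha hra h1 h2] at hj
      rw [H.forb (mem_segList.1 hj).1]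
      exact h4 j hj
    · change TravelOK w' k (otherWire w' (p m) r) (p m) (ms.map p)
      rw [H.other h1]
      exact WIso.travel H h1 (nodeOn_other h2) h5

theorem WIso.path (H : WIso w w' p) {k : ℕ} {ms : List ℕ} (h : PathOK w k ms) : PathOK w' k (ms.map p) := by
  cases ms with
  | nil => exact h
  | cons m ms =>
    obtain ⟨h1, h2, h3, h4⟩ := h
    refine ⟨(H.valid m).2 h1, (H.nodeOn h1).2 h2, ?_, ?_⟩
    · intro j hj
      obtain ⟨j, rfl⟩ := p.surjective j
      rw [H.mem_tail h1 h2] at hj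
      rw [H.forb (mem_tailList.1 hj).1]
      exact h3 j hj
    · change TravelOK w' k (otherWire w' (p m) k) (p m) (ms.map p)
      rw [H.other h1]
      exact H.travel h1 (nodeOn_other h2) h4

theorem WIso.tail_perm (H : WIso w w' p) {r a : ℕ} (ha : ValidNode w a) (hra : NodeOnWire w a r) :
    (tailList w' r (p a)).Perm ((tailList w r a).map p) := by
  rw [List.perm_ext_iff_of_nodup (tailList_nodup _ _ _)
    ((tailList_nodup _ _ _).map p.injective)]
  intro j
  obtain ⟨j, rfl⟩ := p.surjective j
  rw [H.mem_tail ha hra, List.mem_map_of_injective p.injective]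

theorem WIso.seg_perm (H : WIso w w' p) {r a b : ℕ} (ha : ValidNode w a) (hra : NodeOnWire w a r)
    (hb : ValidNode w b) (hrb : NodeOnWire w b r) :
    (segList w' r (p a) (p b)).Perm ((segList w r a b).map p) := by
  rw [List.perm_ext_iff_of_nodup (segList_nodup _ _ _ _)
    ((segList_nodup _ _ _ _).map p.injective)]
  intro j
  obtain ⟨j, rfl⟩ := p.surjective j
  rw [H.mem_seg ha hra hb hrb, List.mem_map_of_injective p.injective]

theorem WIso.visitTail_perm (H : WIso w w' p) {k : ℕ} : ∀ {r a : ℕ} {ms : List ℕ}, ValidNode w a →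
    NodeOnWire w a r → TravelOK w k r a ms →
    (visitTail w' r (p a) (ms.map p)).Perm ((visitTail w r a ms).map p)
  | r, a, [], ha, hra, _ => H.tail_perm ha hra
  | r, a, m :: ms, ha, hra, h => by
    obtain ⟨h1, h2, h3, h4, h5⟩ := h
    simp only [visitTail, List.map_cons, List.map_append]
    rw [H.other h1]
    exact (H.seg_perm ha hra h1 h2).append
      ((WIso.visitTail_perm H h1 (nodeOn_other h2) h5).cons _)

theorem WIso.visit_nodup (H : WIso w w' p) {k : ℕ} {ms : List ℕ} (h : PathOK w k ms)
    (hn : (visitList w k ms).Nodup) : (visitList w' k (ms.map p)).Nodup := by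
  cases ms with
  | nil => simp [visitList]
  | cons m ms =>
    obtain ⟨h1, h2, h3, h4⟩ := h
    have : (visitList w' k ((m :: ms).map p)).Perm ((visitList w k (m :: ms)).map p) := by
      simp only [visitList, List.map_cons, List.map_append]
      rw [H.other h1]
      exact (H.tail_perm h1 h2).append
        ((H.visitTail_perm h1 (nodeOn_other h2) h4).cons _)
    rw [this.nodup_iff]
    exact hn.map p.injective

theorem WIso.pathVal_eq (H : WIso w w' p) (T : ℕ → ℝ) : ∀ {r : ℕ} {ms : List ℕ}, (∀ m ∈ ms, ValidNode w m) →
    pathVal w' r (ms.map p) T = pathVal w r ms (fun j => T (p j))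
  | r, [], _ => rfl
  | r, m :: ms, h => by
    simp only [List.map_cons, pathVal]
    rw [H.other (h m (by simp)), WIso.pathVal_eq H T (fun x hx => h x (by simp [hx]))]

end

/-! ### Invariance under 2-moves -/

/-- the `λ`-inequalities in terms of a 1-based sequence, with right-hand sides `R c`. -/
def LamN (w : List ℕ) (R : ℕ → ℝ) (T : ℕ → ℝ) : Prop :=
  ∀ j, 1 ≤ j → j ≤ w.length → T j ≤ R (letterAt w j) +
    ∑ k ∈ Finset.Icc 1 w.length, (if j < k then lamCoeff w j k else 0) * T k

/-- the string inequalities in terms of a 1-based sequence. -/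
def ConeN (n : ℕ) (w : List ℕ) (T : ℕ → ℝ) : Prop :=
  ∀ k ms, 1 ≤ k → k ≤ n → PathOK w k ms → (visitList w k ms).Nodup → 0 ≤ pathVal w k ms T

theorem pathVal_congr {w : List ℕ} {T T' : ℕ → ℝ} : ∀ {r : ℕ} {ms : List ℕ},
    (∀ m ∈ ms, T m = T' m) → pathVal w r ms T = pathVal w r ms T'
  | r, [], _ => rfl
  | r, m :: ms, h => by
    simp only [pathVal]
    rw [h m (by simp), pathVal_congr (fun x hx => h x (by simp [hx]))]

theorem ConeN.congr {n : ℕ} {w : List ℕ} {T T' : ℕ → ℝ}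
    (h : ∀ j, 1 ≤ j → j ≤ w.length → T j = T' j) (hT : ConeN n w T) : ConeN n w T' := by
  intro k ms h1 h2 h3 h4
  rw [← pathVal_congr (T := T)]
  · exact hT k ms h1 h2 h3 h4
  · intro m hm
    have := pathOK_valid h3 m hm
    exact h m this.1 this.2

theorem LamN.congr {w : List ℕ} {R : ℕ → ℝ} {T T' : ℕ → ℝ}
    (h : ∀ j, 1 ≤ j → j ≤ w.length → T j = T' j) (hT : LamN w R T) : LamN w R T' := by
  intro j h1 h2
  have := hT j h1 h2
  rw [h j h1 h2] at this
  refine this.trans (le_of_eq ?_)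
  congr 1
  apply Finset.sum_congr rfl
  intro k hk
  rw [Finset.mem_Icc] at hk
  rw [h k hk.1 hk.2]

theorem sum_Fin_eq (N : ℕ) (f : ℕ → ℝ) :
    ∑ k : Fin N, f ((k : ℕ) + 1) = ∑ k ∈ Finset.Icc 1 N, f k := by
  rw [Fin.sum_univ_eq_sum_range (fun i => f (i + 1)) N]
  apply Finset.sum_bij (fun i _ => i + 1)
  · intro i hi; simp at hi ⊢; omega
  · intro i _ j _ h; omega
  · intro k hk; simp at hk; exact ⟨k - 1, by simp; omega, by omega⟩
  · intro i _; rfl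

theorem mem_stringPolytope_iff (n : ℕ) (w : List ℕ) (hw : w.length = Dim n) (lam : ℕ → ℤ)
    (t : Fin (Dim n) → ℝ) :
    t ∈ stringPolytope n w lam ↔ ConeN n w (fun m => entry n t (m - 1)) ∧
      LamN w (fun c => (lam c : ℝ)) (fun m => entry n t (m - 1)) := by
  have he : ∀ j : Fin (Dim n), entry n t (j : ℕ) = t j := by
    intro j; simp [entry]
  have hs : ∀ j : ℕ, ∑ k : Fin (Dim n),
      (if (j : ℕ) < (k : ℕ) then lamCoeff w ((j : ℕ) + 1) ((k : ℕ) + 1) else 0) * t k =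
      ∑ k ∈ Finset.Icc 1 w.length, (if j + 1 < k then lamCoeff w (j + 1) k else 0) *
        entry n t (k - 1) := by
    intro j
    rw [hw, ← sum_Fin_eq (Dim n)
      (fun k => (if j + 1 < k then lamCoeff w (j + 1) k else 0) * entry n t (k - 1))]
    apply Finset.sum_congr rfl
    intro k _
    simp only [Nat.add_sub_cancel, he, Nat.add_lt_add_iff_right]
  unfold stringPolytope
  rw [Set.mem_inter_iff, mem_stringCone_iff]
  refine and_congr Iff.rfl ?_
  unfold lamCone LamN
  rw [Set.mem_ofPred_eq]
  unfold LamIneq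
  constructor
  · intro h j h1 h2
    have := h ⟨j - 1, by omega⟩
    rw [hs] at this
    dsimp only at this
    rw [show j - 1 + 1 = j by omega] at this
    rw [← he] at this
    exact this
  · intro h j
    have := h (j + 1) (by omega) (by omega)
    rw [hs]
    simp only [Nat.add_sub_cancel, he] at this
    exact this

theorem cases_pos {L j : ℕ} (h : 1 ≤ j) :
    j ≤ L ∨ j = L + 1 ∨ j = L + 2 ∨ ∃ i, 1 ≤ i ∧ j = L + 2 + i := by
  by_cases h1 : j ≤ L + 2
  · omega
  · exact Or.inr (Or.inr (Or.inr ⟨j - (L + 2), by omega, by omega⟩))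

theorem step_at (u v : List ℕ) (a b : ℕ) (hab : a + 1 < b ∨ b + 1 < a) (j : ℕ) (hj : 1 ≤ j) :
    letterAt (u ++ b :: a :: v) (Equiv.swap (u.length + 1) (u.length + 2) j) =
      letterAt (u ++ a :: b :: v) j ∧
    wireX (u ++ b :: a :: v) (Equiv.swap (u.length + 1) (u.length + 2) j) =
      wireX (u ++ a :: b :: v) j ∧
    wireY (u ++ b :: a :: v) (Equiv.swap (u.length + 1) (u.length + 2) j) =
      wireY (u ++ a :: b :: v) j := by
  have e1 : ∀ x y : ℕ, ∀ z : List ℕ, letterAt (x :: y :: z) 1 = x := fun _ _ _ => rfl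
  have e2 : ∀ x y : ℕ, ∀ z : List ℕ, letterAt (x :: y :: z) 2 = y := fun _ _ _ => rfl
  have s1 : ∀ x y : ℕ, ∀ z : List ℕ, stateAbove (x :: y :: z) 1 = 1 := by
    intro x y z; simp [stateAbove, wordProd]
  have s2 : ∀ x y : ℕ, ∀ z : List ℕ, stateAbove (x :: y :: z) 2 = sTrans x := by
    intro x y z; simp [stateAbove, wordProd]
  have c1 : sTrans b a = a := Equiv.swap_apply_of_ne_of_ne (by omega) (by omega)
  have c2 : sTrans b (a + 1) = a + 1 := Equiv.swap_apply_of_ne_of_ne (by omega) (by omega)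
  have c3 : sTrans a b = b := Equiv.swap_apply_of_ne_of_ne (by omega) (by omega)
  have c4 : sTrans a (b + 1) = b + 1 := Equiv.swap_apply_of_ne_of_ne (by omega) (by omega)
  rcases cases_pos (L := u.length) hj with h | rfl | rfl | ⟨i, hi, rfl⟩
  · rw [Equiv.swap_apply_of_ne_of_ne (by omega) (by omega)]
    simp only [letterAt_append_left hj h, wireX_append_left hj h, wireY_append_left hj h, and_self]
  · rw [Equiv.swap_apply_left]
    simp only [letterAt_append_right (show 1 ≤ 1 by norm_num),
      letterAt_append_right (show 1 ≤ 2 by norm_num), e1, e2, wireX, wireY,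
      stateAbove_append_right (show 1 ≤ 1 by norm_num), stateAbove_append_right (show 1 ≤ 2 by norm_num),
      Equiv.Perm.mul_apply, s1, s2, c1, c2, Equiv.Perm.one_apply, and_self]
  · rw [Equiv.swap_apply_right]
    simp only [letterAt_append_right (show 1 ≤ 1 by norm_num),
      letterAt_append_right (show 1 ≤ 2 by norm_num), e1, e2, wireX, wireY,
      stateAbove_append_right (show 1 ≤ 1 by norm_num), stateAbove_append_right (show 1 ≤ 2 by norm_num),
      Equiv.Perm.mul_apply, s1, s2, c3, c4, Equiv.Perm.one_apply, and_self]
  · rw [Equiv.swap_apply_of_ne_of_ne (by omega) (by omega)]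
    have l1 : ∀ x y, u ++ x :: y :: v = (u ++ [x, y]) ++ v := by intro x y; simp
    have l2 : ∀ x y : ℕ, u.length + 2 + i = (u ++ [x, y]).length + i := by intro x y; simp
    have l3 : wordProd (u ++ [a, b]) = wordProd (u ++ [b, a]) := by
      simp only [wordProd_append, wordProd_cons, wordProd_nil, mul_one]
      rw [sTrans_comm hab]
    rw [l1 a b, l1 b a]
    refine ⟨?_, ?_, ?_⟩
    · conv_lhs => rw [l2 b a, letterAt_append_right hi]
      conv_rhs => rw [l2 a b, letterAt_append_right hi]
    · conv_lhs => rw [l2 b a, wireX_append_right hi]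
      conv_rhs => rw [l2 a b, wireX_append_right hi, l3]
    · conv_lhs => rw [l2 b a, wireY_append_right hi]
      conv_rhs => rw [l2 a b, wireY_append_right hi, l3]

theorem swap_cases (L j : ℕ) :
    (j = L + 1 ∧ Equiv.swap (L + 1) (L + 2) j = L + 2) ∨
    (j = L + 2 ∧ Equiv.swap (L + 1) (L + 2) j = L + 1) ∨
    (j ≠ L + 1 ∧ j ≠ L + 2 ∧ Equiv.swap (L + 1) (L + 2) j = j) := by
  by_cases h1 : j = L + 1
  · subst h1; simp
  by_cases h2 : j = L + 2
  · subst h2; simp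
  · right; right; exact ⟨h1, h2, Equiv.swap_apply_of_ne_of_ne h1 h2⟩

theorem swap_valid {N L : ℕ} (hL : L + 2 ≤ N) (j : ℕ) :
    (1 ≤ Equiv.swap (L + 1) (L + 2) j ∧ Equiv.swap (L + 1) (L + 2) j ≤ N) ↔ (1 ≤ j ∧ j ≤ N) := by
  rcases swap_cases L j with ⟨h, h'⟩ | ⟨h, h'⟩ | ⟨h, h', h''⟩ <;> omega

theorem step_wiso (u v : List ℕ) (a b : ℕ) (hab : a + 1 < b ∨ b + 1 < a) :
    WIso (u ++ a :: b :: v) (u ++ b :: a :: v)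
      (Equiv.swap (u.length + 1) (u.length + 2)) := by
  refine ⟨?_, ?_, ?_, ?_⟩
  · intro j
    unfold ValidNode
    rw [swap_valid (by simp)]
    simp
  · intro j hj; exact (step_at u v a b hab j hj.1).2.1
  · intro j hj; exact (step_at u v a b hab j hj.1).2.2
  · intro j j' r h1 h2 h3 h4 hlt
    by_cases hp : j = u.length + 1 ∧ j' = u.length + 2
    · exfalso
      obtain ⟨rfl, rfl⟩ := hp
      unfold NodeOnWire at h3 h4
      simp only [wireX_append_right (show 1 ≤ 1 by norm_num),
        wireY_append_right (show 1 ≤ 1 by norm_num), wireX_append_right (show 1 ≤ 2 by norm_num),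
        wireY_append_right (show 1 ≤ 2 by norm_num)] at h3 h4
      have x1 : wireX (a :: b :: v) 1 = a := by simp [wireX, letterAt, stateAbove, wordProd]
      have x2 : wireY (a :: b :: v) 1 = a + 1 := by simp [wireY, letterAt, stateAbove, wordProd]
      have x3 : wireX (a :: b :: v) 2 = b := by
        simp only [wireX, letterAt, stateAbove, wordProd]
        simp [sTrans]
        exact Equiv.swap_apply_of_ne_of_ne (by omega) (by omega)
      have x4 : wireY (a :: b :: v) 2 = b + 1 := by
        simp only [wireY, letterAt, stateAbove, wordProd]
        simp [sTrans]
        exact Equiv.swap_apply_of_ne_of_ne (by omega) (by omega)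
      rw [x1, x2] at h3
      rw [x3, x4] at h4
      have inj := (wordProd u).injective
      rcases h3 with h3 | h3 <;> rcases h4 with h4 | h4 <;>
        · have := inj (h3.trans h4.symm); omega
    · rcases swap_cases u.length j with ⟨h, h'⟩ | ⟨h, h'⟩ | ⟨h, h', h''⟩ <;>
      rcases swap_cases u.length j' with ⟨g, g'⟩ | ⟨g, g'⟩ | ⟨g, g', g''⟩ <;> omega

theorem step_poly (n : ℕ) (u v : List ℕ) (a b : ℕ) (hab : a + 1 < b ∨ b + 1 < a) (R T : ℕ → ℝ)
    (hC : ConeN n (u ++ b :: a :: v) T) (hL : LamN (u ++ b :: a :: v) R T) :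
    ConeN n (u ++ a :: b :: v) (fun j => T (Equiv.swap (u.length + 1) (u.length + 2) j)) ∧
    LamN (u ++ a :: b :: v) R (fun j => T (Equiv.swap (u.length + 1) (u.length + 2) j)) := by
  have H := step_wiso u v a b hab
  constructor
  · intro k ms h1 h2 h3 h4
    rw [← H.pathVal_eq T (pathOK_valid h3)]
    exact hC k _ h1 h2 (H.path h3) (H.visit_nodup h3 h4)
  · intro j h1 h2
    set p := Equiv.swap (u.length + 1) (u.length + 2) with hp
    have hv := (H.valid j).2 ⟨h1, h2⟩
    have := hL (p j) hv.1 hv.2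
    have hl : ∀ j, 1 ≤ j → letterAt (u ++ b :: a :: v) (p j) = letterAt (u ++ a :: b :: v) j :=
      fun j hj => (step_at u v a b hab j hj).1
    rw [hl j h1] at this
    refine this.trans (le_of_eq ?_)
    congr 1
    symm
    apply Finset.sum_equiv p
    · intro k
      have := H.valid k
      unfold ValidNode at this
      rw [Finset.mem_Icc, Finset.mem_Icc, this]
    · intro k hk
      rw [Finset.mem_Icc] at hk
      congr 1
      have hlc : lamCoeff (u ++ b :: a :: v) (p j) (p k) = lamCoeff (u ++ a :: b :: v) j k := by
        unfold lamCoeff; rw [hl j h1, hl k hk.1]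
      rw [hlc]
      have l1 : letterAt (u ++ a :: b :: v) (u.length + 1) = a := by
        rw [letterAt_append_right (by norm_num)]; rfl
      have l2 : letterAt (u ++ a :: b :: v) (u.length + 2) = b := by
        rw [letterAt_append_right (by norm_num)]; rfl
      by_cases hpr : (j = u.length + 1 ∧ k = u.length + 2) ∨ (j = u.length + 2 ∧ k = u.length + 1)
      · have : lamCoeff (u ++ a :: b :: v) j k = 0 := by
          unfold lamCoeff
          rcases hpr with ⟨rfl, rfl⟩ | ⟨rfl, rfl⟩
          · rw [l1, l2, if_neg (by omega), if_neg (by omega)]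
          · rw [l1, l2, if_neg (by omega), if_neg (by omega)]
        rw [this]; simp
      · have : p j < p k ↔ j < k := by
          rw [hp]
          rcases swap_cases u.length j with ⟨h, h'⟩ | ⟨h, h'⟩ | ⟨h, h', h''⟩ <;>
          rcases swap_cases u.length k with ⟨g, g'⟩ | ⟨g, g'⟩ | ⟨g, g', g''⟩ <;> omega
        simp only [this]

theorem poly_equiv (n : ℕ) {w w' : List ℕ} (h : TwoMoveEquiv w w') (R : ℕ → ℝ) :
    ∃ p : Equiv.Perm ℕ, (∀ j, (1 ≤ p j ∧ p j ≤ w.length) ↔ (1 ≤ j ∧ j ≤ w.length)) ∧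
      ∀ T : ℕ → ℝ, (ConeN n w (fun j => T (p j)) ∧ LamN w R (fun j => T (p j))) ↔
        (ConeN n w' T ∧ LamN w' R T) := by
  induction h with
  | refl => exact ⟨1, fun _ => Iff.rfl, fun _ => Iff.rfl⟩
  | tail h1 h2 ih =>
    obtain ⟨p, hp, hT⟩ := ih
    have hlen := (TwoMoveEquiv.perm h1).length_eq
    obtain ⟨u, v, a, b, hab, rfl, rfl⟩ := h2
    refine ⟨p.trans (Equiv.swap (u.length + 1) (u.length + 2)), ?_, ?_⟩
    · intro j
      simp only [Equiv.trans_apply]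
      rw [swap_valid, hp]
      rw [hlen]; simp
    · intro T
      rw [← Function.comp_def] 
      have := hT (fun j => T (Equiv.swap (u.length + 1) (u.length + 2) j))
      simp only [Function.comp_def, Equiv.trans_apply]
      rw [this]
      constructor
      · rintro ⟨h, h'⟩
        have := step_poly n u v b a hab.symm R _ h h'
        simpa using this
      · rintro ⟨h, h'⟩
        exact step_poly n u v a b hab R _ h h'

/-! ### Rigorous paths of normal form words -/

theorem nodeOn_left {u v : List ℕ} {j r : ℕ} (h1 : 1 ≤ j) (h2 : j ≤ u.length) :
    NodeOnWire (u ++ v) j r ↔ NodeOnWire u j r := by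
  unfold NodeOnWire; rw [wireX_append_left h1 h2, wireY_append_left h1 h2]

theorem other_left {u v : List ℕ} {j r : ℕ} (h1 : 1 ≤ j) (h2 : j ≤ u.length) :
    otherWire (u ++ v) j r = otherWire u j r := by
  unfold otherWire; rw [wireX_append_left h1 h2, wireY_append_left h1 h2]

theorem forb_left {u v : List ℕ} {k j r : ℕ} (h1 : 1 ≤ j) (h2 : j ≤ u.length) :
    Forbidden (u ++ v) k j r ↔ Forbidden u k j r := by
  unfold Forbidden; rw [other_left h1 h2]

theorem valid_left {u : List ℕ} (v : List ℕ) {j : ℕ} (h : ValidNode u j) :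
    ValidNode (u ++ v) j := by
  refine ⟨h.1, ?_⟩
  have := h.2
  rw [List.length_append]; omega

theorem pathVal_left {u v : List ℕ} (T : ℕ → ℝ) : ∀ {r : ℕ} {ms : List ℕ},
    (∀ m ∈ ms, ValidNode u m) → pathVal (u ++ v) r ms T = pathVal u r ms T
  | r, [], _ => rfl
  | r, m :: ms, h => by
    have hm := h m (by simp)
    simp only [pathVal]
    rw [other_left hm.1 hm.2, pathVal_left T (fun x hx => h x (by simp [hx]))]

/-! lifting of paths -/

/-- the nodes of `u ++ v` on wire `r` not in `u`. -/
def extraOn (u v : List ℕ) (r : ℕ) : List ℕ := tailList (u ++ v) r u.length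

theorem tail_left_perm {u v : List ℕ} {r b : ℕ} (hb : ValidNode u b) :
    (tailList (u ++ v) r b).Perm (tailList u r b ++ extraOn u v r) := by
  have hd : (tailList u r b ++ extraOn u v r).Nodup := by
    refine List.Nodup.append (tailList_nodup _ _ _) (tailList_nodup _ _ _) ?_
    intro x h1 h2
    have := (mem_tailList.1 h1).1.2
    have := (mem_tailList.1 h2).2.2
    omega
  rw [List.perm_ext_iff_of_nodup (tailList_nodup _ _ _) hd]
  intro j
  unfold extraOn
  rw [List.mem_append, mem_tailList, mem_tailList, mem_tailList]
  have := hb.2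
  constructor
  · rintro ⟨h1, h2, h3⟩
    by_cases hj : j ≤ u.length
    · left
      exact ⟨⟨h1.1, hj⟩, (nodeOn_left h1.1 hj).1 h2, h3⟩
    · right; exact ⟨h1, h2, by omega⟩
  · rintro (⟨h1, h2, h3⟩ | ⟨h1, h2, h3⟩)
    · exact ⟨valid_left v h1, (nodeOn_left h1.1 h1.2).2 h2, h3⟩
    · exact ⟨h1, h2, by omega⟩

theorem mem_seg_left {u v : List ℕ} {r b c j : ℕ} (hb : ValidNode u b) (hc : ValidNode u c) :
    j ∈ segList (u ++ v) r b c ↔ j ∈ segList u r b c := by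
  rw [mem_segList, mem_segList]
  have h1 := hb.2
  have h2 := hc.2
  constructor
  · rintro ⟨g1, g2, g3, g4⟩
    have hj : j ≤ u.length := by rcases lt_max_iff.1 g4 with h | h <;> omega
    exact ⟨⟨g1.1, hj⟩, (nodeOn_left g1.1 hj).1 g2, g3, g4⟩
  · rintro ⟨g1, g2, g3, g4⟩
    exact ⟨valid_left v g1, (nodeOn_left g1.1 g1.2).2 g2, g3, g4⟩

theorem seg_left_perm {u v : List ℕ} {r b c : ℕ} (hb : ValidNode u b) (hc : ValidNode u c) :
    (segList (u ++ v) r b c).Perm (segList u r b c) := by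
  rw [List.perm_ext_iff_of_nodup (segList_nodup _ _ _ _) (segList_nodup _ _ _ _)]
  intro j
  exact mem_seg_left hb hc

theorem travel_lift {u v : List ℕ} {k : ℕ}
    (hE : ∀ j ∈ extraOn u v (k + 1), ¬ Forbidden (u ++ v) k j (k + 1)) :
    ∀ {r b : ℕ} {ms : List ℕ}, ValidNode u b → TravelOK u k r b ms →
    TravelOK (u ++ v) k r b ms ∧
    (visitTail (u ++ v) r b ms).Perm (visitTail u r b ms ++ extraOn u v (k + 1))
  | r, b, [], hb, h => by
    obtain ⟨rfl, h2⟩ := h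
    refine ⟨⟨rfl, ?_⟩, tail_left_perm hb⟩
    intro j hj
    rw [(tail_left_perm hb).mem_iff, List.mem_append] at hj
    rcases hj with hj | hj
    · have := (mem_tailList.1 hj).1
      rw [forb_left this.1 this.2]
      exact h2 j hj
    · exact hE j hj
  | r, b, m :: ms, hb, h => by
    obtain ⟨h1, h2, h3, h4, h5⟩ := h
    have ih := travel_lift hE h1 h5
    refine ⟨⟨valid_left v h1, (nodeOn_left h1.1 h1.2).2 h2, h3, ?_, ?_⟩, ?_⟩
    · intro j hj
      rw [mem_seg_left hb h1] at hj
      have := (mem_segList.1 hj).1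
      rw [forb_left this.1 this.2]
      exact h4 j hj
    · rw [other_left h1.1 h1.2]; exact ih.1
    · simp only [visitTail]
      rw [other_left h1.1 h1.2, List.append_assoc, List.cons_append]
      exact (seg_left_perm hb h1).append (ih.2.cons _)

theorem visitTail_valid {w : List ℕ} {k : ℕ} : ∀ {r b : ℕ} {ms : List ℕ},
    TravelOK w k r b ms → ∀ x ∈ visitTail w r b ms, ValidNode w x
  | r, b, [], _ => by
    intro x hx; exact (mem_tailList.1 hx).1
  | r, b, m :: ms, h => by
    obtain ⟨h1, h2, h3, h4, h5⟩ := h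
    intro x hx
    simp only [visitTail, List.mem_append, List.mem_cons] at hx
    rcases hx with hx | rfl | hx
    · exact (mem_segList.1 hx).1
    · exact h1
    · exact visitTail_valid h5 x hx

theorem path_lift {u v : List ℕ} {k : ℕ} {ms : List ℕ}
    (hE0 : ∀ j ∈ extraOn u v k, ¬ Forbidden (u ++ v) k j k)
    (hE : ∀ j ∈ extraOn u v (k + 1), ¬ Forbidden (u ++ v) k j (k + 1))
    (hd : ∀ j ∈ extraOn u v k, j ∉ extraOn u v (k + 1))
    (h : PathOK u k ms) (hn : (visitList u k ms).Nodup) :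
    PathOK (u ++ v) k ms ∧ (visitList (u ++ v) k ms).Nodup := by
  cases ms with
  | nil => exact h.elim
  | cons m ms =>
    obtain ⟨h1, h2, h3, h4⟩ := h
    have ht := travel_lift hE h1 h4
    constructor
    · refine ⟨valid_left v h1, (nodeOn_left h1.1 h1.2).2 h2, ?_, ?_⟩
      · intro j hj
        rw [(tail_left_perm h1).mem_iff, List.mem_append] at hj
        rcases hj with hj | hj
        · have := (mem_tailList.1 hj).1
          rw [forb_left this.1 this.2]
          exact h3 j hj
        · exact hE0 j hj
      · rw [other_left h1.1 h1.2]; exact ht.1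
    · have hp : (visitList (u ++ v) k (m :: ms)).Perm
          (visitList u k (m :: ms) ++ (extraOn u v k ++ extraOn u v (k + 1))) := by
        simp only [visitList]
        rw [other_left h1.1 h1.2]
        refine ((tail_left_perm h1).append (ht.2.cons _)).trans ?_
        rw [← Multiset.coe_eq_coe]
        simp only [← Multiset.coe_add, ← Multiset.cons_coe, ← Multiset.singleton_add]
        abel
      rw [hp.nodup_iff]
      refine List.Nodup.append hn ?_ ?_
      · exact List.Nodup.append (tailList_nodup _ _ _) (tailList_nodup _ _ _)
          (fun x hx hx' => hd x hx hx')
      · intro x hx hx'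
        have e1 : ValidNode u x := by
          simp only [visitList, List.mem_append, List.mem_cons] at hx
          rcases hx with hx | rfl | hx
          · exact (mem_tailList.1 hx).1
          · exact h1
          · exact visitTail_valid h4 x hx
        have e2 := e1.2
        rcases List.mem_append.1 hx' with hx' | hx' <;>
          · have := (mem_tailList.1 hx').2.2
            omega

/-! the wires of a block -/

theorem nf_length (a : ℕ) (σ : List Bool) :
    (nf a σ).length = σ.length * (σ.length + 1) / 2 := by
  induction σ generalizing a with
  | nil => simp [nf]
  | cons s σ ih =>
    cases s <;> simp only [nf, List.length_append, ih, descB_length, ascB_length, List.length_cons,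
      dim_succ]

theorem take_descB (a m i : ℕ) (h2 : i < m) :
    (descB a m).take i = descB (a + m - i) i := by
  apply List.ext_getElem
  · simp [descB]; omega
  · intro j h1 h2
    simp [descB]; simp [descB] at h1; omega

theorem take_ascB (a m i : ℕ) (h2 : i < m) :
    (ascB a m).take i = ascB a i := by
  apply List.ext_getElem
  · simp [ascB]; omega
  · intro j h1 h2
    simp [ascB]

theorem letter_descB (a m i : ℕ) (h1 : 1 ≤ i) (h2 : i ≤ m) :
    letterAt (descB a m) i = a + m + 1 - i := by
  unfold letterAt
  rw [List.getD_eq_getElem _ _ (by rw [descB_length]; omega)]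
  simp [descB]; omega

theorem letter_ascB (a m i : ℕ) (h1 : 1 ≤ i) (h2 : i ≤ m) :
    letterAt (ascB a m) i = a + i := by
  unfold letterAt
  rw [List.getD_eq_getElem _ _ (by rw [ascB_length]; omega)]
  simp [ascB]; omega

theorem wires_D (a : ℕ) (σ : List Bool) (i : ℕ) (h1 : 1 ≤ i) (h2 : i ≤ σ.length + 1) :
    wireX (nf a σ ++ descB a (σ.length + 1)) ((nf a σ).length + i) = a + i ∧
    wireY (nf a σ ++ descB a (σ.length + 1)) ((nf a σ).length + i) = a + σ.length + 2 := by
  rw [wireX_append_right h1, wireY_append_right h1]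
  unfold wireX wireY stateAbove
  rw [letter_descB _ _ _ h1 h2, take_descB _ _ _ (by omega), wordProd_descB, wordProd_descB,
    wordProd_nf, wordProd_nf]
  constructor <;> split_ifs <;> omega

theorem wires_A (a : ℕ) (σ : List Bool) (i : ℕ) (h1 : 1 ≤ i) (h2 : i ≤ σ.length + 1) :
    wireX (nf (a + 1) σ ++ ascB a (σ.length + 1)) ((nf (a + 1) σ).length + i) = a + 1 ∧
    wireY (nf (a + 1) σ ++ ascB a (σ.length + 1)) ((nf (a + 1) σ).length + i) =
      a + σ.length + 3 - i := by
  rw [wireX_append_right h1, wireY_append_right h1]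
  unfold wireX wireY stateAbove
  rw [letter_ascB _ _ _ h1 h2, take_ascB _ _ _ (by omega), wordProd_ascB, wordProd_ascB,
    wordProd_nf, wordProd_nf]
  constructor <;> split_ifs <;> omega

theorem split_node {L j : ℕ} (h : 1 ≤ j) : j ≤ L ∨ ∃ i, 1 ≤ i ∧ j = L + i := by
  by_cases h' : j ≤ L
  · exact Or.inl h'
  · exact Or.inr ⟨j - L, by omega, by omega⟩

theorem nf_wires (a : ℕ) (σ : List Bool) (j : ℕ) (h : ValidNode (nf a σ) j) :
    a + 1 ≤ wireX (nf a σ) j ∧ wireX (nf a σ) j < wireY (nf a σ) j ∧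
      wireY (nf a σ) j ≤ a + σ.length + 1 := by
  induction σ generalizing a with
  | nil => obtain ⟨h1, h2⟩ := h; simp [nf] at h2; omega
  | cons s σ ih =>
    obtain ⟨h1, h2⟩ := h
    cases s with
    | true =>
      simp only [nf, List.length_append, descB_length, List.length_cons] at h2 ⊢
      rcases split_node (L := (nf a σ).length) h1 with h | ⟨i, hi, rfl⟩
      · rw [wireX_append_left h1 h, wireY_append_left h1 h]
        have := ih a ⟨h1, h⟩
        omega
      · have := wires_D a σ i hi (by omega)
        omega
    | false =>
      simp only [nf, List.length_append, ascB_length, List.length_cons] at h2 ⊢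
      rcases split_node (L := (nf (a + 1) σ).length) h1 with h | ⟨i, hi, rfl⟩
      · rw [wireX_append_left h1 h, wireY_append_left h1 h]
        have := ih (a + 1) ⟨h1, h⟩
        omega
      · have := wires_A a σ i hi (by omega)
        omega

theorem nf_on {a : ℕ} {σ : List Bool} {j r : ℕ} (h : ValidNode (nf a σ) j)
    (hr : NodeOnWire (nf a σ) j r) : a + 1 ≤ r ∧ r ≤ a + σ.length + 1 := by
  have := nf_wires a σ j h
  rcases hr with hr | hr <;> omega

/-! ### Classification of rigorous paths of normal form words -/

/-- `v` is a descending block appended to `u`. -/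
structure BD (u v : List ℕ) (a m : ℕ) : Prop where
  len : v.length = m
  old : ∀ {j r}, ValidNode u j → NodeOnWire u j r → a + 1 ≤ r ∧ r ≤ a + m
  on : ∀ {i r}, 1 ≤ i → i ≤ m → (NodeOnWire (u ++ v) (u.length + i) r ↔ r = a + i ∨ r = a + m + 1)
  o1 : ∀ {i}, 1 ≤ i → i ≤ m → otherWire (u ++ v) (u.length + i) (a + i) = a + m + 1
  o2 : ∀ {i}, 1 ≤ i → i ≤ m → otherWire (u ++ v) (u.length + i) (a + m + 1) = a + i

/-- `v` is an ascending block appended to `u`. -/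
structure BA (u v : List ℕ) (a m : ℕ) : Prop where
  len : v.length = m
  old : ∀ {j r}, ValidNode u j → NodeOnWire u j r → a + 2 ≤ r ∧ r ≤ a + m + 1
  on : ∀ {i r}, 1 ≤ i → i ≤ m →
    (NodeOnWire (u ++ v) (u.length + i) r ↔ r = a + 1 ∨ r = a + m + 2 - i)
  o1 : ∀ {i}, 1 ≤ i → i ≤ m → otherWire (u ++ v) (u.length + i) (a + 1) = a + m + 2 - i
  o2 : ∀ {i}, 1 ≤ i → i ≤ m → otherWire (u ++ v) (u.length + i) (a + m + 2 - i) = a + 1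

theorem bd_nf (a : ℕ) (σ : List Bool) :
    BD (nf a σ) (descB a (σ.length + 1)) a (σ.length + 1) := by
  refine ⟨descB_length _ _, ?_, ?_, ?_, ?_⟩
  · intro j r h1 h2
    have := nf_on h1 h2
    omega
  · intro i r h1 h2
    unfold NodeOnWire
    rw [(wires_D a σ i h1 h2).1, (wires_D a σ i h1 h2).2]
    omega
  · intro i h1 h2
    unfold otherWire
    rw [(wires_D a σ i h1 h2).1, (wires_D a σ i h1 h2).2]
    rw [if_pos rfl]; omega
  · intro i h1 h2
    unfold otherWire
    rw [(wires_D a σ i h1 h2).1, (wires_D a σ i h1 h2).2]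
    rw [if_neg (by omega)]

theorem ba_nf (a : ℕ) (σ : List Bool) :
    BA (nf (a + 1) σ) (ascB a (σ.length + 1)) a (σ.length + 1) := by
  refine ⟨ascB_length _ _, ?_, ?_, ?_, ?_⟩
  · intro j r h1 h2
    have := nf_on h1 h2
    omega
  · intro i r h1 h2
    unfold NodeOnWire
    rw [(wires_A a σ i h1 h2).1, (wires_A a σ i h1 h2).2]
    omega
  · intro i h1 h2
    unfold otherWire
    rw [(wires_A a σ i h1 h2).1, (wires_A a σ i h1 h2).2]
    rw [if_pos rfl]; omega
  · intro i h1 h2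
    unfold otherWire
    rw [(wires_A a σ i h1 h2).1, (wires_A a σ i h1 h2).2]
    rw [if_neg (by omega)]

theorem valid_new {u v : List ℕ} {m i : ℕ} (hl : v.length = m) (h1 : 1 ≤ i) :
    ValidNode (u ++ v) (u.length + i) ↔ i ≤ m := by
  unfold ValidNode; rw [List.length_append]; omega

theorem node_cases {u v : List ℕ} {m j : ℕ} (hl : v.length = m) (h : ValidNode (u ++ v) j) :
    ValidNode u j ∨ ∃ i, 1 ≤ i ∧ i ≤ m ∧ j = u.length + i := by
  obtain ⟨h1, h2⟩ := h
  rw [List.length_append] at h2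
  by_cases h' : j ≤ u.length
  · exact Or.inl ⟨h1, h'⟩
  · exact Or.inr ⟨j - u.length, by omega, by omega, by omega⟩

/-- on the last wire of a descending block the path leaves at the next node and then ends. -/
theorem BD.last {u v : List ℕ} {a m k i : ℕ} (B : BD u v a m) (hi : 1 ≤ i) (him : i ≤ m)
    (hk : k ≤ a + i) {ms : List ℕ}
    (h : TravelOK (u ++ v) k (a + m + 1) (u.length + i) ms) :
    (ms = [] ∧ k = a + m) ∨ (ms = [u.length + (i + 1)] ∧ k = a + i ∧ i + 1 ≤ m) := by
  cases ms with
  | nil =>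
    left; refine ⟨rfl, ?_⟩
    have := h.1; omega
  | cons m1 ms =>
    obtain ⟨h1, h2, h3, h4, h5⟩ := h
    rw [if_neg (by omega)] at h3
    rcases node_cases B.len h1 with h1' | ⟨i1, g1, g2, rfl⟩
    · have := h1'.2; omega
    have hi1 : i1 = i + 1 := by
      by_contra hne
      have hm : u.length + (i + 1) ∈ segList (u ++ v) (a + m + 1) (u.length + i) (u.length + i1) := by
        rw [mem_segList]
        refine ⟨(valid_new B.len (by omega)).2 (by omega), (B.on (by omega) (by omega)).2 (Or.inr rfl),
          ?_, ?_⟩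
        · exact min_lt_iff.2 (Or.inl (by omega))
        · exact lt_max_iff.2 (Or.inr (by omega))
      apply h4 _ hm
      unfold Forbidden
      rw [B.o2 (by omega) (by omega)]
      omega
    subst hi1
    rw [B.o2 g1 g2] at h5
    right
    cases ms with
    | nil =>
      refine ⟨rfl, ?_, g2⟩
      have := h5.1; omega
    | cons m2 ms =>
      exfalso
      obtain ⟨e1, e2, e3, e4, e5⟩ := h5
      rw [if_neg (by omega)] at e3
      rcases node_cases B.len e1 with h1' | ⟨i2, f1, f2, rfl⟩
      · have := h1'.2; omega
      · rw [B.on f1 f2] at e2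
        omega

theorem BD.old_travel {u v : List ℕ} {a m k : ℕ} (B : BD u v a m) :
    ∀ {r b : ℕ} {ms : List ℕ}, ValidNode u b → NodeOnWire u b r →
      TravelOK (u ++ v) k r b ms → TravelOK u k r b ms
  | r, b, [], hb, hr, h => by
    refine ⟨h.1, ?_⟩
    intro j hj
    have hj' := (mem_tailList.1 hj).1
    rw [← forb_left (v := v) hj'.1 hj'.2]
    apply h.2
    rw [(tail_left_perm hb).mem_iff]
    exact List.mem_append_left _ hj
  | r, b, m1 :: ms, hb, hr, h => by
    obtain ⟨h1, h2, h3, h4, h5⟩ := h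
    have hro := B.old hb hr
    rcases node_cases B.len h1 with h1' | ⟨i, g1, g2, rfl⟩
    · rw [nodeOn_left h1'.1 h1'.2] at h2
      rw [other_left h1'.1 h1'.2] at h5
      refine ⟨h1', h2, h3, ?_, BD.old_travel B h1' (nodeOn_other h2) h5⟩
      intro j hj
      have hj' := (mem_segList.1 hj).1
      rw [← forb_left (v := v) hj'.1 hj'.2]
      apply h4
      rw [mem_seg_left hb h1']
      exact hj
    · exfalso
      have := hb.2
      have hrk : k < r := by
        by_contra hc
        rw [if_pos (by omega)] at h3
        omega
      rw [B.on g1 g2] at h2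
      have hr' : r = a + i := by omega
      subst hr'
      rw [B.o1 g1 g2] at h5
      have := B.last g1 g2 (by omega) h5
      omega

/-- paths in a word with a descending last block. -/
theorem BD.path {u v : List ℕ} {a m k : ℕ} (B : BD u v a m) (h1 : a + 1 ≤ k) (h2 : k ≤ a + m)
    {ms : List ℕ} (h : PathOK (u ++ v) k ms) :
    (PathOK u k ms ∧ k + 1 ≤ a + m) ∨ (∃ i, 1 ≤ i ∧ i ≤ m ∧ ∀ T, pathVal (u ++ v) k ms T =
      T (u.length + i) - (if i = m then 0 else T (u.length + i + 1))) := by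
  cases ms with
  | nil => exact h.elim
  | cons m0 ms =>
    obtain ⟨g1, g2, g3, g4⟩ := h
    rcases node_cases B.len g1 with g1' | ⟨i, e1, e2, rfl⟩
    · left
      rw [nodeOn_left g1'.1 g1'.2] at g2
      rw [other_left g1'.1 g1'.2] at g4
      have ho := B.old_travel g1' (nodeOn_other g2) g4
      refine ⟨⟨g1', g2, ?_, ho⟩, ?_⟩
      · intro j hj
        have hj' := (mem_tailList.1 hj).1
        rw [← forb_left (v := v) hj'.1 hj'.2]
        apply g3
        rw [(tail_left_perm g1').mem_iff]
        exact List.mem_append_left _ hj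
      · have : ∀ {r b : ℕ} {ms : List ℕ}, ValidNode u b → NodeOnWire u b r →
            TravelOK u k r b ms → k + 1 ≤ a + m := by
          intro r b ms
          induction ms generalizing r b with
          | nil =>
            intro q1 q2 q3
            have := B.old q1 q2
            have := q3.1
            omega
          | cons x ms ih =>
            intro q1 q2 q3
            exact ih q3.1 (nodeOn_other q3.2.1) q3.2.2.2.2
        exact this g1' (nodeOn_other g2) ho
    · right
      rw [B.on e1 e2] at g2
      have hk : k = a + i := by omega
      subst hk
      rw [B.o1 e1 e2] at g4
      refine ⟨i, e1, e2, ?_⟩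
      intro T
      rcases B.last e1 e2 (by omega) g4 with ⟨rfl, hk⟩ | ⟨rfl, hk, him⟩
      · have : i = m := by omega
        simp only [pathVal, B.o1 e1 e2]
        rw [if_pos (by omega), if_pos this]; ring
      · simp only [pathVal, B.o1 e1 e2, B.o2 (show 1 ≤ i + 1 by omega) him]
        rw [if_pos (by omega), if_neg (by omega), if_neg (by omega)]
        rw [add_assoc]; ring

/-- in an ascending block, leaving the first wire. -/
theorem BA.leave {u v : List ℕ} {a m k i : ℕ} (B : BA u v a m) (hi : 1 ≤ i) (him : i ≤ m)
    (hk : k < a + m + 2 - i) {ms : List ℕ}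
    (h : TravelOK (u ++ v) k (a + m + 2 - i) (u.length + i) ms) :
    ms = [] ∧ k + i = a + m + 1 := by
  cases ms with
  | nil =>
    refine ⟨rfl, ?_⟩
    have := h.1; omega
  | cons m1 ms =>
    exfalso
    obtain ⟨h1, h2, h3, h4, h5⟩ := h
    rw [if_neg (by omega)] at h3
    rcases node_cases B.len h1 with h1' | ⟨i1, g1, g2, rfl⟩
    · have := h1'.2; omega
    · rw [B.on g1 g2] at h2
      omega

theorem BA.first {u v : List ℕ} {a m k i : ℕ} (B : BA u v a m) (h1 : a + 1 ≤ k) (hi : 1 ≤ i)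
    (him : i ≤ m) (hk : a + m + 2 - i ≥ k) {ms : List ℕ}
    (h : TravelOK (u ++ v) k (a + 1) (u.length + i) ms) :
    2 ≤ i ∧ ms = [u.length + (i - 1)] ∧ k + i = a + m + 2 := by
  cases ms with
  | nil =>
    have := h.1; omega
  | cons m1 ms =>
    obtain ⟨h1, h2, h3, h4, h5⟩ := h
    rw [if_pos (by omega)] at h3
    rcases node_cases B.len h1 with h1' | ⟨i1, g1, g2, rfl⟩
    · rw [nodeOn_left h1'.1 h1'.2] at h2
      have := B.old h1' h2
      omega
    · rw [B.o1 g1 g2] at h5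
      obtain ⟨rfl, h6⟩ := B.leave g1 g2 (by omega) h5
      have : i1 = i - 1 := by omega
      subst this
      exact ⟨by omega, rfl, by omega⟩

theorem BA.old_travel {u v : List ℕ} {a m k : ℕ} (B : BA u v a m) (hak : a + 1 ≤ k) :
    ∀ {r b : ℕ} {ms : List ℕ}, ValidNode u b → NodeOnWire u b r →
      TravelOK (u ++ v) k r b ms → TravelOK u k r b ms
  | r, b, [], hb, hr, h => by
    refine ⟨h.1, ?_⟩
    intro j hj
    have hj' := (mem_tailList.1 hj).1
    rw [← forb_left (v := v) hj'.1 hj'.2]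
    apply h.2
    rw [(tail_left_perm hb).mem_iff]
    exact List.mem_append_left _ hj
  | r, b, m1 :: ms, hb, hr, h => by
    obtain ⟨h1, h2, h3, h4, h5⟩ := h
    have hro := B.old hb hr
    rcases node_cases B.len h1 with h1' | ⟨i, g1, g2, rfl⟩
    · rw [nodeOn_left h1'.1 h1'.2] at h2
      rw [other_left h1'.1 h1'.2] at h5
      refine ⟨h1', h2, h3, ?_, BA.old_travel B hak h1' (nodeOn_other h2) h5⟩
      intro j hj
      have hj' := (mem_segList.1 hj).1
      rw [← forb_left (v := v) hj'.1 hj'.2]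
      apply h4
      rw [mem_seg_left hb h1']
      exact hj
    · exfalso
      have := hb.2
      have hrk : k < r := by
        by_contra hc
        rw [if_pos (by omega)] at h3
        omega
      rw [B.on g1 g2] at h2
      have hr' : r = a + m + 2 - i := by omega
      subst hr'
      rw [B.o2 g1 g2] at h5
      have := B.first hak g1 g2 (by omega) h5
      omega

/-- paths in a word with an ascending last block. -/
theorem BA.path {u v : List ℕ} {a m k : ℕ} (B : BA u v a m) (h1 : a + 1 ≤ k) (h2 : k ≤ a + m)
    {ms : List ℕ} (h : PathOK (u ++ v) k ms) :
    (PathOK u k ms ∧ a + 2 ≤ k) ∨ (∃ i, 1 ≤ i ∧ i ≤ m ∧ ∀ T, pathVal (u ++ v) k ms T =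
      T (u.length + i) - (if i = m then 0 else T (u.length + i + 1))) := by
  cases ms with
  | nil => exact h.elim
  | cons m0 ms =>
    obtain ⟨g1, g2, g3, g4⟩ := h
    rcases node_cases B.len g1 with g1' | ⟨i, e1, e2, rfl⟩
    · left
      rw [nodeOn_left g1'.1 g1'.2] at g2
      rw [other_left g1'.1 g1'.2] at g4
      have ho := B.old_travel h1 g1' (nodeOn_other g2) g4
      refine ⟨⟨g1', g2, ?_, ho⟩, (B.old g1' g2).1⟩
      intro j hj
      have hj' := (mem_tailList.1 hj).1
      rw [← forb_left (v := v) hj'.1 hj'.2]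
      apply g3
      rw [(tail_left_perm g1').mem_iff]
      exact List.mem_append_left _ hj
    · right
      rw [B.on e1 e2] at g2
      by_cases hk : k = a + 1
      · subst hk
        rw [B.o1 e1 e2] at g4
        obtain ⟨rfl, h6⟩ := B.leave e1 e2 (by omega) g4
        refine ⟨i, e1, e2, ?_⟩
        intro T
        simp only [pathVal, B.o1 e1 e2]
        rw [if_pos (by omega), if_pos (by omega)]; ring
      · have hk' : k = a + m + 2 - i := by omega
        subst hk'
        rw [B.o2 e1 e2] at g4
        obtain ⟨h5, rfl, h6⟩ := B.first h1 e1 e2 le_rfl g4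
        refine ⟨i - 1, by omega, by omega, ?_⟩
        intro T
        simp only [pathVal, B.o2 e1 e2, B.o1 (show 1 ≤ i - 1 by omega) (show i - 1 ≤ m by omega)]
        rw [if_neg (by omega), if_pos (by omega), if_neg (by omega)]
        rw [show u.length + (i - 1) + 1 = u.length + i by omega]; ring

/-! the special paths -/

theorem tail_nil {w : List ℕ} {r b : ℕ}
    (h : ∀ j, ValidNode w j → NodeOnWire w j r → b < j → False) : tailList w r b = [] := by
  rw [List.eq_nil_iff_forall_not_mem]
  intro j hj
  obtain ⟨h1, h2, h3⟩ := mem_tailList.1 hj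
  exact h j h1 h2 h3

theorem seg_nil {w : List ℕ} {r b c : ℕ} (h : b + 1 = c ∨ c + 1 = b) : segList w r b c = [] := by
  rw [List.eq_nil_iff_forall_not_mem]
  intro j hj
  obtain ⟨_, _, h3, h4⟩ := mem_segList.1 hj
  rw [min_lt_iff] at h3
  rw [lt_max_iff] at h4
  omega

theorem one_path {w : List ℕ} {k m0 : ℕ} (h0 : ValidNode w m0) (h1 : NodeOnWire w m0 k)
    (h2 : tailList w k m0 = []) (h3 : otherWire w m0 k = k + 1)
    (h4 : tailList w (k + 1) m0 = []) :
    PathOK w k [m0] ∧ (visitList w k [m0]).Nodup := by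
  refine ⟨⟨h0, h1, by rw [h2]; simp, ?_⟩, ?_⟩
  · rw [h3]; exact ⟨rfl, by rw [h4]; simp⟩
  · simp only [visitList, visitTail]; rw [h3, h2, h4]; simp

theorem two_path {w : List ℕ} {k m0 m1 q : ℕ} (h0 : ValidNode w m0) (h1 : NodeOnWire w m0 k)
    (h2 : tailList w k m0 = []) (h3 : otherWire w m0 k = q) (g0 : ValidNode w m1)
    (g1 : NodeOnWire w m1 q) (hd : if q ≤ k then m1 < m0 else m0 < m1)
    (hs : m0 + 1 = m1 ∨ m1 + 1 = m0) (g3 : otherWire w m1 q = k + 1)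
    (h4 : tailList w (k + 1) m1 = []) :
    PathOK w k [m0, m1] ∧ (visitList w k [m0, m1]).Nodup := by
  subst h3
  refine ⟨⟨h0, h1, by rw [h2]; simp, g0, g1, hd, by rw [seg_nil hs]; simp, ?_⟩, ?_⟩
  · rw [g3]; exact ⟨rfl, by rw [h4]; simp⟩
  · simp only [visitList, visitTail]; rw [g3, h2, h4, seg_nil hs]; simp; omega

theorem BD.special {u v : List ℕ} {a m : ℕ} (B : BD u v a m) {i : ℕ} (h1 : 1 ≤ i) (h2 : i ≤ m) :
    ∃ k ms, a + 1 ≤ k ∧ k ≤ a + m ∧ PathOK (u ++ v) k ms ∧ (visitList (u ++ v) k ms).Nodup ∧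
      ∀ T, pathVal (u ++ v) k ms T =
        T (u.length + i) - (if i = m then 0 else T (u.length + i + 1)) := by
  have tl : ∀ i r, 1 ≤ i → i ≤ m → r ≤ a + i → tailList (u ++ v) r (u.length + i) = [] := by
    intro i r hi hi' hr
    apply tail_nil
    intro j q1 q2 q3
    rcases node_cases B.len q1 with g1' | ⟨i', e1, e2, rfl⟩
    · have := g1'.2; omega
    · rw [B.on e1 e2] at q2; omega
  by_cases him : i = m
  · subst him
    refine ⟨a + i, [u.length + i], by omega, le_rfl, ?_⟩
    have := one_path (w := u ++ v) (k := a + i) (m0 := u.length + i)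
      ((valid_new B.len h1).2 h2) ((B.on h1 h2).2 (Or.inl rfl)) (tl i _ h1 h2 le_rfl)
      (B.o1 h1 h2) (by
        apply tail_nil
        intro j q1 _ q3
        have := q1.2
        rw [List.length_append, B.len] at this
        omega)
    refine ⟨this.1, this.2, ?_⟩
    intro T
    simp only [pathVal, B.o1 h1 h2]
    rw [if_pos (by omega), if_pos trivial]; ring
  · refine ⟨a + i, [u.length + i, u.length + (i + 1)], by omega, by omega, ?_⟩
    have := two_path (w := u ++ v) (k := a + i) (m0 := u.length + i) (m1 := u.length + (i + 1))
      ((valid_new B.len h1).2 h2) ((B.on h1 h2).2 (Or.inl rfl)) (tl i _ h1 h2 le_rfl)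
      (B.o1 h1 h2) ((valid_new B.len (by omega)).2 (by omega))
      ((B.on (by omega) (by omega)).2 (Or.inr rfl)) (by rw [if_neg (by omega)]; omega)
      (by omega) (B.o2 (by omega) (by omega)) (tl _ _ (by omega) (by omega) (by omega))
    refine ⟨this.1, this.2, ?_⟩
    intro T
    simp only [pathVal, B.o1 h1 h2, B.o2 (show 1 ≤ i + 1 by omega) (show i + 1 ≤ m by omega)]
    rw [if_pos (by omega), if_neg (by omega), if_neg him, add_assoc]; ring

theorem BA.special {u v : List ℕ} {a m : ℕ} (B : BA u v a m) {i : ℕ} (h1 : 1 ≤ i) (h2 : i ≤ m) :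
    ∃ k ms, a + 1 ≤ k ∧ k ≤ a + m ∧ PathOK (u ++ v) k ms ∧ (visitList (u ++ v) k ms).Nodup ∧
      ∀ T, pathVal (u ++ v) k ms T =
        T (u.length + i) - (if i = m then 0 else T (u.length + i + 1)) := by
  have tl : ∀ i r, 1 ≤ i → i ≤ m → r = a + m + 2 - i → tailList (u ++ v) r (u.length + i) = [] := by
    intro i r hi hi' hr
    apply tail_nil
    intro j q1 q2 q3
    rcases node_cases B.len q1 with g1' | ⟨i', e1, e2, rfl⟩
    · have := g1'.2; omega
    · rw [B.on e1 e2] at q2; omega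
  by_cases him : i = m
  · subst him
    refine ⟨a + 1, [u.length + i], by omega, by omega, ?_⟩
    have := one_path (w := u ++ v) (k := a + 1) (m0 := u.length + i)
      ((valid_new B.len h1).2 h2) ((B.on h1 h2).2 (Or.inl rfl)) (by
        apply tail_nil
        intro j q1 _ q3
        have := q1.2
        rw [List.length_append, B.len] at this
        omega)
      (by rw [B.o1 h1 h2]; omega) (tl i _ h1 h2 (by omega))
    refine ⟨this.1, this.2, ?_⟩
    intro T
    simp only [pathVal, B.o1 h1 h2]
    rw [if_pos (by omega), if_pos trivial]; ring
  · have hk : a + m + 1 - i = a + m + 2 - (i + 1) := by omega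
    refine ⟨a + m + 2 - (i + 1), [u.length + (i + 1), u.length + i], by omega, by omega, ?_⟩
    have := two_path (w := u ++ v) (k := a + m + 2 - (i + 1)) (m0 := u.length + (i + 1))
      (m1 := u.length + i) ((valid_new B.len (by omega)).2 (by omega))
      ((B.on (by omega) (by omega)).2 (Or.inr rfl)) (tl _ _ (by omega) (by omega) rfl)
      (B.o2 (by omega) (by omega)) ((valid_new B.len h1).2 h2)
      ((B.on h1 h2).2 (Or.inl rfl)) (by rw [if_pos (by omega)]; omega)
      (by omega) (by rw [B.o1 h1 h2]; omega) (tl _ _ h1 h2 (by omega))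
    refine ⟨this.1, this.2, ?_⟩
    intro T
    simp only [pathVal, B.o1 h1 h2, B.o2 (show 1 ≤ i + 1 by omega) (show i + 1 ≤ m by omega)]
    rw [if_neg (by omega), if_pos (by omega), if_neg him, add_assoc]; ring

theorem BD.lift {u v : List ℕ} {a m k : ℕ} (B : BD u v a m) (h2 : k + 1 ≤ a + m)
    {ms : List ℕ} (h : PathOK u k ms) (hn : (visitList u k ms).Nodup) :
    PathOK (u ++ v) k ms ∧ (visitList (u ++ v) k ms).Nodup := by
  have key : ∀ r j, r ≤ a + m → j ∈ extraOn u v r → ∃ i, 1 ≤ i ∧ i ≤ m ∧ j = u.length + i ∧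
      r = a + i := by
    intro r j hr hj
    obtain ⟨q1, q2, q3⟩ := mem_tailList.1 hj
    rcases node_cases B.len q1 with g1' | ⟨i', e1, e2, rfl⟩
    · have := g1'.2; omega
    · rw [B.on e1 e2] at q2
      exact ⟨i', e1, e2, rfl, by omega⟩
  apply path_lift _ _ _ h hn
  · intro j hj
    obtain ⟨i, e1, e2, rfl, e3⟩ := key k j (by omega) hj
    unfold Forbidden
    subst e3
    rw [B.o1 e1 e2]; omega
  · intro j hj
    obtain ⟨i, e1, e2, rfl, e3⟩ := key (k + 1) j (by omega) hj
    unfold Forbidden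
    rw [e3, B.o1 e1 e2]; omega
  · intro j hj hj'
    obtain ⟨i, e1, e2, rfl, e3⟩ := key k j (by omega) hj
    obtain ⟨i', e1', e2', e4, e3'⟩ := key (k + 1) _ (by omega) hj'
    omega

theorem BA.lift {u v : List ℕ} {a m k : ℕ} (B : BA u v a m) (h2 : a + 2 ≤ k)
    {ms : List ℕ} (h : PathOK u k ms) (hn : (visitList u k ms).Nodup) :
    PathOK (u ++ v) k ms ∧ (visitList (u ++ v) k ms).Nodup := by
  have key : ∀ r j, a + 2 ≤ r → j ∈ extraOn u v r → ∃ i, 1 ≤ i ∧ i ≤ m ∧ j = u.length + i ∧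
      r = a + m + 2 - i := by
    intro r j hr hj
    obtain ⟨q1, q2, q3⟩ := mem_tailList.1 hj
    rcases node_cases B.len q1 with g1' | ⟨i', e1, e2, rfl⟩
    · have := g1'.2; omega
    · rw [B.on e1 e2] at q2
      exact ⟨i', e1, e2, rfl, by omega⟩
  apply path_lift _ _ _ h hn
  · intro j hj
    obtain ⟨i, e1, e2, rfl, e3⟩ := key k j (by omega) hj
    unfold Forbidden
    subst e3
    rw [B.o2 e1 e2]; omega
  · intro j hj
    obtain ⟨i, e1, e2, rfl, e3⟩ := key (k + 1) j (by omega) hj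
    unfold Forbidden
    rw [e3, B.o2 e1 e2]; omega
  · intro j hj hj'
    obtain ⟨i, e1, e2, rfl, e3⟩ := key k j (by omega) hj
    obtain ⟨i', e1', e2', e4, e3'⟩ := key (k + 1) _ (by omega) hj'
    omega

/-- the chain inequalities. -/
def Chain : List Bool → (ℕ → ℝ) → Prop
  | [], _ => True
  | _ :: σ, T => Chain σ T ∧ ∀ i, 1 ≤ i → i ≤ σ.length + 1 →
      (if i = σ.length + 1 then 0 else T (σ.length * (σ.length + 1) / 2 + i + 1)) ≤
        T (σ.length * (σ.length + 1) / 2 + i)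

theorem chain_of_cone (a : ℕ) (σ : List Bool) (T : ℕ → ℝ)
    (h : ∀ k ms, a + 1 ≤ k → k ≤ a + σ.length → PathOK (nf a σ) k ms →
      (visitList (nf a σ) k ms).Nodup → 0 ≤ pathVal (nf a σ) k ms T) : Chain σ T := by
  induction σ generalizing a with
  | nil => trivial
  | cons s σ ih =>
    cases s with
    | true =>
      have B := bd_nf a σ
      refine ⟨ih a ?_, ?_⟩
      · intro k ms h1 h2 h3 h4
        have := B.lift (by omega) h3 h4
        have := h k ms h1 (by simp only [List.length_cons]; omega) this.1 this.2
        simp only [nf] at this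
        rwa [pathVal_left T (pathOK_valid h3)] at this
      · intro i h1 h2
        obtain ⟨k, ms, g1, g2, g3, g4, g5⟩ := B.special h1 h2
        have := h k ms g1 (by simp only [List.length_cons]; omega) g3 g4
        simp only [nf] at this
        rw [g5, nf_length] at this
        linarith
    | false =>
      have B := ba_nf a σ
      refine ⟨ih (a + 1) ?_, ?_⟩
      · intro k ms h1 h2 h3 h4
        have := B.lift (by omega) h3 h4
        have := h k ms (by omega) (by simp only [List.length_cons]; omega) this.1 this.2
        simp only [nf] at this
        rwa [pathVal_left T (pathOK_valid h3)] at this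
      · intro i h1 h2
        obtain ⟨k, ms, g1, g2, g3, g4, g5⟩ := B.special h1 h2
        have := h k ms g1 (by simp only [List.length_cons]; omega) g3 g4
        simp only [nf] at this
        rw [g5, nf_length] at this
        linarith

theorem cone_of_chain (a : ℕ) (σ : List Bool) (T : ℕ → ℝ) (h : Chain σ T) :
    ∀ k ms, a + 1 ≤ k → k ≤ a + σ.length → PathOK (nf a σ) k ms →
      0 ≤ pathVal (nf a σ) k ms T := by
  induction σ generalizing a with
  | nil => intro k ms h1 h2; simp at h2; omega
  | cons s σ ih =>
    intro k ms h1 h2 h3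
    simp only [List.length_cons] at h2
    cases s with
    | true =>
      have B := bd_nf a σ
      simp only [nf] at h3 ⊢
      rcases B.path h1 (by omega) h3 with ⟨h4, h5⟩ | ⟨i, g1, g2, g3⟩
      · rw [pathVal_left T (pathOK_valid h4)]
        exact ih a h.1 k ms h1 (by omega) h4
      · have := h.2 i g1 g2
        rw [g3, nf_length]; linarith
    | false =>
      have B := ba_nf a σ
      simp only [nf] at h3 ⊢
      rcases B.path h1 (by omega) h3 with ⟨h4, h5⟩ | ⟨i, g1, g2, g3⟩
      · rw [pathVal_left T (pathOK_valid h4)]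
        exact ih (a + 1) h.1 k ms (by omega) (by omega) h4
      · have := h.2 i g1 g2
        rw [g3, nf_length]; linarith

theorem coneN_nf_iff (σ : List Bool) (T : ℕ → ℝ) : ConeN σ.length (nf 0 σ) T ↔ Chain σ T := by
  constructor
  · intro h
    apply chain_of_cone 0
    intro k ms h1 h2 h3 h4
    exact h k ms (by omega) (by omega) h3 h4
  · intro h k ms h1 h2 h3 _
    exact cone_of_chain 0 σ T h k ms (by omega) (by omega) h3

/-! ### Gelfand–Cetlin form of the inequalities -/

/-- successive differences in a block. -/
def Sd (L m : ℕ) (T : ℕ → ℝ) (i : ℕ) : ℝ := T (L + i) - (if i = m then 0 else T (L + i + 1))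

/-- interlacing form of all inequalities for a normal form word. -/
def GCP : List Bool → ℕ → (ℕ → ℝ) → (ℕ → ℝ) → Prop
  | [], _, _, _ => True
  | true :: σ, a, μ, T =>
      (∀ i, 1 ≤ i → i ≤ σ.length + 1 →
        0 ≤ Sd (σ.length * (σ.length + 1) / 2) (σ.length + 1) T i ∧
        Sd (σ.length * (σ.length + 1) / 2) (σ.length + 1) T i ≤
          μ (a + (σ.length + 1) + 1 - i) - μ (a + (σ.length + 1) + 1 - i + 1)) ∧
      GCP σ a (fun c => μ c -
        Sd (σ.length * (σ.length + 1) / 2) (σ.length + 1) T (a + (σ.length + 1) + 1 - c)) T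
  | false :: σ, a, μ, T =>
      (∀ i, 1 ≤ i → i ≤ σ.length + 1 →
        0 ≤ Sd (σ.length * (σ.length + 1) / 2) (σ.length + 1) T i ∧
        Sd (σ.length * (σ.length + 1) / 2) (σ.length + 1) T i ≤ μ (a + i) - μ (a + i + 1)) ∧
      GCP σ (a + 1) (fun c => μ c +
        Sd (σ.length * (σ.length + 1) / 2) (σ.length + 1) T (c - (a + 1))) T

theorem LamN.congrR {w : List ℕ} {R R' T : ℕ → ℝ}
    (h : ∀ j, 1 ≤ j → j ≤ w.length → R (letterAt w j) = R' (letterAt w j)) (hL : LamN w R T) :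
    LamN w R' T := by
  intro j h1 h2
  rw [← h j h1 h2]
  exact hL j h1 h2

theorem nf_letters (a : ℕ) (σ : List Bool) (j : ℕ) (h1 : 1 ≤ j) (h2 : j ≤ (nf a σ).length) :
    a + 1 ≤ letterAt (nf a σ) j ∧ letterAt (nf a σ) j ≤ a + σ.length := by
  induction σ generalizing a with
  | nil => simp [nf] at h2; omega
  | cons s σ ih =>
    cases s with
    | true =>
      simp only [nf, List.length_append, descB_length, List.length_cons] at h2 ⊢
      rcases split_node (L := (nf a σ).length) h1 with h | ⟨i, hi, rfl⟩
      · rw [letterAt_append_left h1 h]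
        have := ih a h
        omega
      · rw [letterAt_append_right hi, letter_descB _ _ _ hi (by omega)]
        omega
    | false =>
      simp only [nf, List.length_append, ascB_length, List.length_cons] at h2 ⊢
      rcases split_node (L := (nf (a + 1) σ).length) h1 with h | ⟨i, hi, rfl⟩
      · rw [letterAt_append_left h1 h]
        have := ih (a + 1) h
        omega
      · rw [letterAt_append_right hi, letter_ascB _ _ _ hi (by omega)]
        omega

/-- the Cartan pairing of columns. -/
def gam (c d : ℕ) : ℝ := if d = c then -2 else if d = c + 1 ∨ d + 1 = c then 1 else 0

theorem lamCoeff_eq (w : List ℕ) (j k : ℕ) :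
    lamCoeff w j k = gam (letterAt w j) (letterAt w k) := rfl

theorem sum_split (L m : ℕ) (f : ℕ → ℝ) :
    ∑ k ∈ Finset.Icc 1 (L + m), f k = ∑ k ∈ Finset.Icc 1 L, f k + ∑ i ∈ Finset.Icc 1 m, f (L + i) := by
  induction m with
  | zero => simp
  | succ m ih =>
    rw [← add_assoc, Finset.sum_Icc_succ_top (by omega), ih, Finset.sum_Icc_succ_top (by omega)]
    rw [add_assoc]; rfl

theorem lamN_append (u v : List ℕ) (R T : ℕ → ℝ) :
    LamN (u ++ v) R T ↔
      LamN u (fun c => R c + ∑ i ∈ Finset.Icc 1 v.length, gam c (letterAt v i) * T (u.length + i)) T ∧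
      ∀ i, 1 ≤ i → i ≤ v.length → T (u.length + i) ≤ R (letterAt v i) +
        ∑ k ∈ Finset.Icc 1 v.length,
          (if i < k then gam (letterAt v i) (letterAt v k) else 0) * T (u.length + k) := by
  have hold : ∀ j, 1 ≤ j → j ≤ u.length →
      (R (letterAt (u ++ v) j) + ∑ k ∈ Finset.Icc 1 (u ++ v).length,
        (if j < k then lamCoeff (u ++ v) j k else 0) * T k =
      (R (letterAt u j) + ∑ i ∈ Finset.Icc 1 v.length,
        gam (letterAt u j) (letterAt v i) * T (u.length + i)) +
      ∑ k ∈ Finset.Icc 1 u.length, (if j < k then lamCoeff u j k else 0) * T k) := by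
    intro j h1 h2
    rw [List.length_append, sum_split, letterAt_append_left h1 h2]
    have e1 : ∑ k ∈ Finset.Icc 1 u.length, (if j < k then lamCoeff (u ++ v) j k else 0) * T k =
        ∑ k ∈ Finset.Icc 1 u.length, (if j < k then lamCoeff u j k else 0) * T k := by
      apply Finset.sum_congr rfl
      intro k hk
      rw [Finset.mem_Icc] at hk
      rw [lamCoeff_eq, lamCoeff_eq, letterAt_append_left h1 h2, letterAt_append_left hk.1 hk.2]
    have e2 : ∑ i ∈ Finset.Icc 1 v.length,
        (if j < u.length + i then lamCoeff (u ++ v) j (u.length + i) else 0) * T (u.length + i) =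
        ∑ i ∈ Finset.Icc 1 v.length, gam (letterAt u j) (letterAt v i) * T (u.length + i) := by
      apply Finset.sum_congr rfl
      intro k hk
      rw [Finset.mem_Icc] at hk
      rw [if_pos (by omega), lamCoeff_eq, letterAt_append_left h1 h2, letterAt_append_right hk.1]
    rw [e1, e2]; ring
  have hnew : ∀ i, 1 ≤ i →
      (R (letterAt (u ++ v) (u.length + i)) + ∑ k ∈ Finset.Icc 1 (u ++ v).length,
        (if u.length + i < k then lamCoeff (u ++ v) (u.length + i) k else 0) * T k =
      R (letterAt v i) + ∑ k ∈ Finset.Icc 1 v.length,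
          (if i < k then gam (letterAt v i) (letterAt v k) else 0) * T (u.length + k)) := by
    intro i h1
    rw [List.length_append, sum_split, letterAt_append_right h1]
    rw [Finset.sum_eq_zero, zero_add]
    · congr 1
      apply Finset.sum_congr rfl
      intro k hk
      rw [Finset.mem_Icc] at hk
      rw [lamCoeff_eq, letterAt_append_right h1, letterAt_append_right hk.1]
      simp only [Nat.add_lt_add_iff_left]
    · intro k hk
      rw [Finset.mem_Icc] at hk
      rw [if_neg (by omega), zero_mul]
  constructor
  · intro h
    constructor
    · intro j h1 h2
      rw [← hold j h1 h2]
      exact h j h1 (by rw [List.length_append]; omega)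
    · intro i h1 h2
      rw [← hnew i h1]
      exact h _ (by omega) (by rw [List.length_append]; omega)
  · rintro ⟨hA, hB⟩ j h1 h2
    rcases split_node (L := u.length) h1 with h | ⟨i, hi, rfl⟩
    · rw [hold j h1 h]
      exact hA j h1 h
    · rw [hnew i hi]
      rw [List.length_append] at h2
      exact hB i hi (by omega)

theorem sum_single' (m i : ℕ) (h1 : 1 ≤ i) (h2 : i ≤ m) (g f : ℕ → ℝ)
    (h : ∀ k, 1 ≤ k → k ≤ m → k ≠ i → g k = 0) (hg : g i = 1) :
    ∑ k ∈ Finset.Icc 1 m, g k * f k = f i := by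
  rw [Finset.sum_eq_single i]
  · rw [hg, one_mul]
  · intro k hk hne
    rw [Finset.mem_Icc] at hk
    rw [h k hk.1 hk.2 hne, zero_mul]
  · intro hn
    exact absurd (Finset.mem_Icc.2 ⟨h1, h2⟩) hn

/-- the inner sum in a block. -/
theorem block_sum (m i L : ℕ) (h1 : 1 ≤ i) (h2 : i ≤ m) (T : ℕ → ℝ) (d : ℕ → ℕ)
    (hd : (∀ k, 1 ≤ k → k ≤ m → d k + k = d i + i) ∨ (∀ k, 1 ≤ k → k ≤ m → d k + i = d i + k)) :
    ∑ k ∈ Finset.Icc 1 m, (if i < k then gam (d i) (d k) else 0) * T (L + k) =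
      if i = m then 0 else T (L + i + 1) := by
  split_ifs with him
  · apply Finset.sum_eq_zero
    intro k hk
    rw [Finset.mem_Icc] at hk
    rw [if_neg (by omega), zero_mul]
  · rw [sum_single' m (i + 1) (by omega) (by omega) (fun k => if i < k then gam (d i) (d k) else 0)
      (fun k => T (L + k))]
    · rfl
    · intro k g1 g2 g3
      try dsimp only
      split_ifs with hik
      · unfold gam
        rcases hd with hd | hd
        · have := hd k g1 g2
          rw [if_neg (by omega), if_neg (by omega)]
        · have := hd k g1 g2
          rw [if_neg (by omega), if_neg (by omega)]
      · rfl
    · try dsimp only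
      rw [if_pos (by omega)]
      unfold gam
      rcases hd with hd | hd
      · have := hd (i + 1) (by omega) (by omega)
        rw [if_neg (by omega), if_pos (by omega)]
      · have := hd (i + 1) (by omega) (by omega)
        rw [if_neg (by omega), if_pos (by omega)]

theorem sum_ind (m L : ℕ) (T : ℕ → ℝ) (P : ℕ → Prop) [DecidablePred P] (i : ℕ) (h1 : 1 ≤ i) (h2 : i ≤ m)
    (h : ∀ k, 1 ≤ k → k ≤ m → (P k ↔ k = i)) :
    ∑ k ∈ Finset.Icc 1 m, (if P k then (1 : ℝ) else 0) * T (L + k) = T (L + i) := by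
  rw [sum_single' m i h1 h2 (fun k => if P k then (1 : ℝ) else 0) (fun k => T (L + k))]
  · intro k g1 g2 g3
    try dsimp only
    rw [if_neg]
    rw [h k g1 g2]; exact g3
  · try dsimp only
    rw [if_pos]
    rw [h i h1 h2]

theorem sum_ind0 (m L : ℕ) (T : ℕ → ℝ) (P : ℕ → Prop) [DecidablePred P]
    (h : ∀ k, 1 ≤ k → k ≤ m → ¬ P k) :
    ∑ k ∈ Finset.Icc 1 m, (if P k then (1 : ℝ) else 0) * T (L + k) = 0 := by
  apply Finset.sum_eq_zero
  intro k hk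
  rw [Finset.mem_Icc] at hk
  rw [if_neg (h k hk.1 hk.2), zero_mul]

/-- `∑ ([d_k = c] - [d_k + 1 = c]) T`. -/
def shiftSum (m L : ℕ) (T : ℕ → ℝ) (d : ℕ → ℕ) (c : ℕ) : ℝ :=
  ∑ k ∈ Finset.Icc 1 m, (if d k = c then (1 : ℝ) else 0) * T (L + k) -
  ∑ k ∈ Finset.Icc 1 m, (if d k + 1 = c then (1 : ℝ) else 0) * T (L + k)

theorem gam_sum (m L : ℕ) (T : ℕ → ℝ) (d : ℕ → ℕ) (c : ℕ) :
    ∑ k ∈ Finset.Icc 1 m, gam c (d k) * T (L + k) =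
      - shiftSum m L T d c + shiftSum m L T d (c + 1) := by
  unfold shiftSum
  have : ∀ k, gam c (d k) * T (L + k) = -((if d k = c then (1 : ℝ) else 0) * T (L + k)) +
      (if d k + 1 = c then (1 : ℝ) else 0) * T (L + k) +
      ((if d k = c + 1 then (1 : ℝ) else 0) * T (L + k) -
      (if d k + 1 = c + 1 then (1 : ℝ) else 0) * T (L + k)) := by
    intro k
    unfold gam
    by_cases q1 : d k = c
    · rw [if_pos q1, if_pos q1, if_neg (by omega), if_neg (by omega), if_pos (by omega)]; ring
    · by_cases q2 : d k = c + 1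
      · rw [if_neg q1, if_pos (by omega), if_neg q1, if_neg (by omega), if_pos q2, if_neg (by omega)]
        ring
      · by_cases q3 : d k + 1 = c
        · rw [if_neg q1, if_pos (by omega), if_neg q1, if_pos q3, if_neg (by omega), if_neg (by omega)]
          ring
        · rw [if_neg q1, if_neg (by omega), if_neg q1, if_neg q3, if_neg (by omega),
            if_neg (by omega)]
          ring
  simp only [this, Finset.sum_add_distrib, Finset.sum_sub_distrib, Finset.sum_neg_distrib]
  ring

theorem GCP.congr {σ : List Bool} {a : ℕ} {μ ν T T' : ℕ → ℝ}
    (hμ : ∀ c, a + 1 ≤ c → c ≤ a + σ.length + 1 → μ c = ν c)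
    (hT : ∀ j, 1 ≤ j → j ≤ σ.length * (σ.length + 1) / 2 → T j = T' j)
    (h : GCP σ a μ T) : GCP σ a ν T' := by
  induction σ generalizing a μ ν with
  | nil => trivial
  | cons s σ ih =>
    simp only [List.length_cons, dim_succ] at hT hμ
    have hS : ∀ i, 1 ≤ i → i ≤ σ.length + 1 →
        Sd (σ.length * (σ.length + 1) / 2) (σ.length + 1) T i =
        Sd (σ.length * (σ.length + 1) / 2) (σ.length + 1) T' i := by
      intro i h1 h2
      unfold Sd
      rw [hT _ (by omega) (by omega)]
      split_ifs with hi
      · rfl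
      · rw [hT _ (by omega) (by omega)]
    cases s with
    | true =>
      refine ⟨?_, ih ?_ (fun j h1 h2 => hT j h1 (by omega)) h.2⟩
      · intro i h1 h2
        rw [← hS i h1 h2, ← hμ _ (by omega) (by omega), ← hμ _ (by omega) (by omega)]
        exact h.1 i h1 h2
      · intro c h1 h2
        try dsimp only
        rw [hμ c (by omega) (by omega), hS _ (by omega) (by omega)]
    | false =>
      refine ⟨?_, ih ?_ (fun j h1 h2 => hT j h1 (by omega)) h.2⟩
      · intro i h1 h2
        rw [← hS i h1 h2, ← hμ _ (by omega) (by omega), ← hμ _ (by omega) (by omega)]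
        exact h.1 i h1 h2
      · intro c h1 h2
        try dsimp only
        rw [hμ c (by omega) (by omega), hS _ (by omega) (by omega)]

theorem gcp_iff (σ : List Bool) (a : ℕ) (μ T : ℕ → ℝ) :
    GCP σ a μ T ↔ Chain σ T ∧ LamN (nf a σ) (fun c => μ c - μ (c + 1)) T := by
  induction σ generalizing a μ with
  | nil =>
    refine ⟨fun _ => ⟨trivial, ?_⟩, fun _ => trivial⟩
    intro j h1 h2
    simp [nf] at h2; omega
  | cons s σ ih =>
    cases s with
    | true =>
      simp only [GCP, Chain, nf]
      rw [ih, lamN_append, descB_length, nf_length]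
      have hR : ∀ {S' : ℕ → ℝ}, LamN (nf a σ) (fun c => (μ c -
          Sd (σ.length * (σ.length + 1) / 2) (σ.length + 1) T (a + (σ.length + 1) + 1 - c)) -
          (μ (c + 1) - Sd (σ.length * (σ.length + 1) / 2) (σ.length + 1) T
            (a + (σ.length + 1) + 1 - (c + 1)))) T ↔
          LamN (nf a σ) (fun c => μ c - μ (c + 1) + ∑ i ∈ Finset.Icc 1 (σ.length + 1),
            gam c (letterAt (descB a (σ.length + 1)) i) *
              T (σ.length * (σ.length + 1) / 2 + i)) T := by
        intro _
        have hs : ∀ c, a + 1 ≤ c → c ≤ a + σ.length + 1 →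
            shiftSum (σ.length + 1) (σ.length * (σ.length + 1) / 2) T
              (letterAt (descB a (σ.length + 1))) c =
            Sd (σ.length * (σ.length + 1) / 2) (σ.length + 1) T (a + (σ.length + 1) + 1 - c) := by
          intro c h1 h2
          unfold shiftSum Sd
          congr 1
          · exact sum_ind (σ.length + 1) (σ.length * (σ.length + 1) / 2) T (fun k => letterAt (descB a (σ.length + 1)) k = c) (a + (σ.length + 1) + 1 - c) (by omega) (by omega) (by
              intro k g1 g2
              rw [letter_descB _ _ _ g1 g2]; omega)
          · split_ifs with hc
            · exact sum_ind0 (σ.length + 1) (σ.length * (σ.length + 1) / 2) T (fun k => letterAt (descB a (σ.length + 1)) k + 1 = c) (by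
                intro k g1 g2
                rw [letter_descB _ _ _ g1 g2]; omega)
            · exact sum_ind (σ.length + 1) (σ.length * (σ.length + 1) / 2) T (fun k => letterAt (descB a (σ.length + 1)) k + 1 = c) (a + (σ.length + 1) + 1 - c + 1) (by omega) (by omega) (by
                intro k g1 g2
                rw [letter_descB _ _ _ g1 g2]; omega)
        have hh : ∀ j, 1 ≤ j → j ≤ (nf a σ).length → _ := fun j h1 h2 => by
          have hl := nf_letters a σ j h1 h2
          have e1 := gam_sum (σ.length + 1) (σ.length * (σ.length + 1) / 2) T
              (letterAt (descB a (σ.length + 1))) (letterAt (nf a σ) j)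
          rw [hs _ (by omega) (by omega), hs _ (by omega) (by omega)] at e1
          exact e1
        constructor
        · apply LamN.congrR
          intro j h1 h2
          try dsimp only
          rw [hh j h1 h2]; ring
        · apply LamN.congrR
          intro j h1 h2
          try dsimp only
          rw [hh j h1 h2]; ring
      rw [hR (S' := T)]
      have hB : ∀ i, 1 ≤ i → i ≤ σ.length + 1 →
          ((0 ≤ Sd (σ.length * (σ.length + 1) / 2) (σ.length + 1) T i ∧
            Sd (σ.length * (σ.length + 1) / 2) (σ.length + 1) T i ≤
          μ (a + (σ.length + 1) + 1 - i) - μ (a + (σ.length + 1) + 1 - i + 1)) ↔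
          ((if i = σ.length + 1 then 0 else T (σ.length * (σ.length + 1) / 2 + i + 1)) ≤
            T (σ.length * (σ.length + 1) / 2 + i) ∧
          T (σ.length * (σ.length + 1) / 2 + i) ≤
            μ (letterAt (descB a (σ.length + 1)) i) - μ (letterAt (descB a (σ.length + 1)) i + 1) +
            ∑ k ∈ Finset.Icc 1 (σ.length + 1), (if i < k then
              gam (letterAt (descB a (σ.length + 1)) i) (letterAt (descB a (σ.length + 1)) k)
              else 0) * T (σ.length * (σ.length + 1) / 2 + k))) := by
        intro i h1 h2
        rw [block_sum _ _ _ h1 h2, letter_descB _ _ _ h1 h2]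
        · unfold Sd
          constructor
          · rintro ⟨q1, q2⟩; constructor <;> linarith
          · rintro ⟨q1, q2⟩; constructor <;> linarith
        · left
          intro k g1 g2
          rw [letter_descB _ _ _ g1 g2, letter_descB _ _ _ h1 h2]; omega
      constructor
      · rintro ⟨q1, q2, q3⟩
        exact ⟨⟨q2, fun i h1 h2 => ((hB i h1 h2).1 (q1 i h1 h2)).1⟩, q3,
          fun i h1 h2 => ((hB i h1 h2).1 (q1 i h1 h2)).2⟩
      · rintro ⟨⟨q2, q4⟩, q3, q5⟩
        exact ⟨fun i h1 h2 => (hB i h1 h2).2 ⟨q4 i h1 h2, q5 i h1 h2⟩, q2, q3⟩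
    | false =>
      simp only [GCP, Chain, nf]
      rw [ih, lamN_append, ascB_length, nf_length]
      have hR : ∀ {S' : ℕ → ℝ}, LamN (nf (a + 1) σ) (fun c => (μ c +
          Sd (σ.length * (σ.length + 1) / 2) (σ.length + 1) T (c - (a + 1))) -
          (μ (c + 1) + Sd (σ.length * (σ.length + 1) / 2) (σ.length + 1) T
            (c + 1 - (a + 1)))) T ↔
          LamN (nf (a + 1) σ) (fun c => μ c - μ (c + 1) + ∑ i ∈ Finset.Icc 1 (σ.length + 1),
            gam c (letterAt (ascB a (σ.length + 1)) i) *
              T (σ.length * (σ.length + 1) / 2 + i)) T := by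
        intro _
        have hs : ∀ c, a + 2 ≤ c → c ≤ a + σ.length + 2 →
            shiftSum (σ.length + 1) (σ.length * (σ.length + 1) / 2) T
              (letterAt (ascB a (σ.length + 1))) c =
            - Sd (σ.length * (σ.length + 1) / 2) (σ.length + 1) T (c - (a + 1)) := by
          intro c h1 h2
          unfold shiftSum Sd
          rw [neg_sub]
          congr 1
          · split_ifs with hc
            · exact sum_ind0 (σ.length + 1) (σ.length * (σ.length + 1) / 2) T (fun k => letterAt (ascB a (σ.length + 1)) k = c) (by
                intro k g1 g2
                rw [letter_ascB _ _ _ g1 g2]; omega)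
            · exact sum_ind (σ.length + 1) (σ.length * (σ.length + 1) / 2) T (fun k => letterAt (ascB a (σ.length + 1)) k = c) (c - (a + 1) + 1) (by omega) (by omega) (by
                intro k g1 g2
                rw [letter_ascB _ _ _ g1 g2]; omega)
          · exact sum_ind (σ.length + 1) (σ.length * (σ.length + 1) / 2) T (fun k => letterAt (ascB a (σ.length + 1)) k + 1 = c) (c - (a + 1)) (by omega) (by omega) (by
              intro k g1 g2
              rw [letter_ascB _ _ _ g1 g2]; omega)
        have hh : ∀ j, 1 ≤ j → j ≤ (nf (a + 1) σ).length → _ := fun j h1 h2 => by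
          have hl := nf_letters (a + 1) σ j h1 h2
          have e1 := gam_sum (σ.length + 1) (σ.length * (σ.length + 1) / 2) T
              (letterAt (ascB a (σ.length + 1))) (letterAt (nf (a + 1) σ) j)
          rw [hs _ (by omega) (by omega), hs _ (by omega) (by omega)] at e1
          exact e1
        constructor
        · apply LamN.congrR
          intro j h1 h2
          try dsimp only
          rw [hh j h1 h2]; ring
        · apply LamN.congrR
          intro j h1 h2
          try dsimp only
          rw [hh j h1 h2]; ring
      rw [hR (S' := T)]
      have hB : ∀ i, 1 ≤ i → i ≤ σ.length + 1 →
          ((0 ≤ Sd (σ.length * (σ.length + 1) / 2) (σ.length + 1) T i ∧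
            Sd (σ.length * (σ.length + 1) / 2) (σ.length + 1) T i ≤
          μ (a + i) - μ (a + i + 1)) ↔
          ((if i = σ.length + 1 then 0 else T (σ.length * (σ.length + 1) / 2 + i + 1)) ≤
            T (σ.length * (σ.length + 1) / 2 + i) ∧
          T (σ.length * (σ.length + 1) / 2 + i) ≤
            μ (letterAt (ascB a (σ.length + 1)) i) - μ (letterAt (ascB a (σ.length + 1)) i + 1) +
            ∑ k ∈ Finset.Icc 1 (σ.length + 1), (if i < k then
              gam (letterAt (ascB a (σ.length + 1)) i) (letterAt (ascB a (σ.length + 1)) k)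
              else 0) * T (σ.length * (σ.length + 1) / 2 + k))) := by
        intro i h1 h2
        rw [block_sum _ _ _ h1 h2, letter_ascB _ _ _ h1 h2]
        · unfold Sd
          constructor
          · rintro ⟨q1, q2⟩; constructor <;> linarith
          · rintro ⟨q1, q2⟩; constructor <;> linarith
        · right
          intro k g1 g2
          rw [letter_ascB _ _ _ g1 g2, letter_ascB _ _ _ h1 h2]; omega
      constructor
      · rintro ⟨q1, q2, q3⟩
        exact ⟨⟨q2, fun i h1 h2 => ((hB i h1 h2).1 (q1 i h1 h2)).1⟩, q3,
          fun i h1 h2 => ((hB i h1 h2).1 (q1 i h1 h2)).2⟩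
      · rintro ⟨⟨q2, q4⟩, q3, q5⟩
        exact ⟨fun i h1 h2 => (hB i h1 h2).2 ⟨q4 i h1 h2, q5 i h1 h2⟩, q2, q3⟩

/-! ### Perturbation argument -/

/-- a `1`-Lipschitz function vanishing exactly at the integers. -/
def phi (x : ℝ) : ℝ := Real.sin (Real.pi * x) / Real.pi

theorem phi_abs (x y : ℝ) : |phi y - phi x| ≤ |y - x| := by
  unfold phi
  rw [← sub_div, abs_div, abs_of_pos Real.pi_pos, div_le_iff₀ Real.pi_pos]
  have h : ∀ a b : ℝ, |Real.sin a - Real.sin b| ≤ |a - b| := by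
    intro a b
    rw [Real.sin_sub_sin, abs_mul, abs_mul, abs_two]
    have h1 := Real.abs_sin_le_abs (x := (a - b) / 2)
    have h2 := Real.abs_cos_le_one ((a + b) / 2)
    rw [abs_div, abs_two] at h1
    have h3 := abs_nonneg (Real.sin ((a - b) / 2))
    nlinarith
  have := h (Real.pi * y) (Real.pi * x)
  rw [← mul_sub, abs_mul, abs_of_pos Real.pi_pos] at this
  linarith

theorem phi_mono {ε x y : ℝ} (hε : ε = 1 ∨ ε = -1) (h : x ≤ y) :
    x + ε * phi x ≤ y + ε * phi y := by
  have h1 := phi_abs x y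
  rw [abs_of_nonneg (by linarith : (0:ℝ) ≤ y - x), abs_le] at h1
  rcases hε with rfl | rfl <;> linarith [h1.1, h1.2]

theorem phi_int (z : ℤ) : phi z = 0 := by
  unfold phi
  rw [mul_comm, Real.sin_int_mul_pi, zero_div]

theorem int_of_phi {x : ℝ} (h : phi x = 0) : ∃ z : ℤ, x = z := by
  unfold phi at h
  rw [div_eq_zero_iff, or_iff_left Real.pi_ne_zero, Real.sin_eq_zero_iff] at h
  obtain ⟨z, hz⟩ := h
  refine ⟨z, ?_⟩
  have := Real.pi_ne_zero
  rw [mul_comm] at hz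
  exact (mul_left_cancel₀ this hz).symm

/-- assembling a perturbation. -/
def pert (L m : ℕ) (e0 es : ℕ → ℝ) (j : ℕ) : ℝ :=
  if j ≤ L then e0 j else ∑ i ∈ Finset.Icc (j - L) m, es i

theorem Sd_pert0 (L m : ℕ) (e0 es : ℕ → ℝ) (i : ℕ) (h1 : 1 ≤ i) (h2 : i ≤ m) :
    Sd L m (pert L m e0 es) i = es i := by
  unfold Sd pert
  rw [if_neg (by omega : ¬ L + i ≤ L), if_neg (by omega : ¬ L + i + 1 ≤ L)]
  have e1 : L + i - L = i := by omega
  have e2 : L + i + 1 - L = i + 1 := by omega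
  rw [e1, e2]
  split_ifs with h
  · subst h; simp
  · have : Finset.Icc i m = insert i (Finset.Icc (i + 1) m) := by
      ext x
      simp only [Finset.mem_Icc, Finset.mem_insert]
      omega
    rw [this, Finset.sum_insert (by simp)]
    ring

theorem Sd_pert (L m : ℕ) (e0 es T : ℕ → ℝ) (ε : ℝ) (i : ℕ) (h1 : 1 ≤ i) (h2 : i ≤ m) :
    Sd L m (fun j => T j + ε * pert L m e0 es j) i = Sd L m T i + ε * es i := by
  rw [← Sd_pert0 L m e0 es i h1 h2]
  unfold Sd
  split_ifs <;> ring

theorem Sd_int (L m : ℕ) (T : ℕ → ℝ)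
    (h : ∀ i, 1 ≤ i → i ≤ m → ∃ z : ℤ, Sd L m T i = z) (i : ℕ) (h1 : 1 ≤ i) (h2 : i ≤ m) :
    ∃ z : ℤ, T (L + i) = z := by
  obtain ⟨d, hd⟩ : ∃ d, i + d = m := ⟨m - i, by omega⟩
  induction d generalizing i with
  | zero =>
    obtain ⟨z, hz⟩ := h i h1 h2
    unfold Sd at hz
    rw [if_pos (by omega)] at hz
    exact ⟨z, by linarith⟩
  | succ d ih =>
    obtain ⟨z, hz⟩ := h i h1 h2
    obtain ⟨y, hy⟩ := ih (i + 1) (by omega) (by omega) (by omega)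
    unfold Sd at hz
    rw [if_neg (by omega), add_assoc, hy] at hz
    exact ⟨z + y, by push_cast; linarith⟩

theorem perturb (σ : List Bool) (a : ℕ) (μ T : ℕ → ℝ) (h : GCP σ a μ T) :
    ∃ e : ℕ → ℝ,
      (∀ ε : ℝ, (ε = 1 ∨ ε = -1) → ∀ ν : ℕ → ℝ,
        (∀ c, a + 1 ≤ c → c ≤ a + σ.length + 1 → ν c = μ c + ε * phi (μ c)) →
        GCP σ a ν (fun j => T j + ε * e j)) ∧
      ((∀ j, 1 ≤ j → j ≤ σ.length * (σ.length + 1) / 2 → e j = 0) →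
        (∀ c, a + 1 ≤ c → c ≤ a + σ.length + 1 → ∃ z : ℤ, μ c = z) →
        ∀ j, 1 ≤ j → j ≤ σ.length * (σ.length + 1) / 2 → ∃ z : ℤ, T j = z) := by
  induction σ generalizing a μ with
  | nil =>
    refine ⟨fun _ => 0, fun _ _ _ _ => trivial, ?_⟩
    intro _ _ j h1 h2
    simp at h2; omega
  | cons s σ ih =>
    simp only [List.length_cons, dim_succ]
    cases s with
    | true =>
      obtain ⟨hS, hG⟩ := h
      obtain ⟨e0, he0, hi0⟩ := ih _ _ hG
      generalize hL : σ.length * (σ.length + 1) / 2 = L at *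
      generalize hm : σ.length + 1 = m at *
      set es : ℕ → ℝ := fun i => phi (μ (a + m + 1 - i)) -
        phi (μ (a + m + 1 - i) - Sd L m T i) with hes
      refine ⟨pert L m e0 es, ?_, ?_⟩
      · intro ε hε ν hν
        simp only [GCP, hL, hm]
        refine ⟨?_, ?_⟩
        · intro i h1 h2
          rw [Sd_pert _ _ _ _ _ _ _ h1 h2, hν _ (by omega) (by omega), hν _ (by omega) (by omega)]
          have q1 := phi_mono hε (x := μ (a + m + 1 - i) - Sd L m T i) (y := μ (a + m + 1 - i))
            (by linarith [(hS i h1 h2).1])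
          have q2 := phi_mono hε (y := μ (a + m + 1 - i) - Sd L m T i) (x := μ (a + m + 1 - i + 1))
            (by linarith [(hS i h1 h2).2])
          simp only [hes]
          constructor <;> linarith
        · have := he0 ε hε (fun c => ν c -
            Sd L m (fun j => T j + ε * pert L m e0 es j) (a + m + 1 - c)) (by
              intro c h1 h2
              rw [Sd_pert _ _ _ _ _ _ _ (by omega) (by omega), hν _ (by omega) (by omega)]
              simp only [hes]
              have ec : a + m + 1 - (a + m + 1 - c) = c := by omega
              rw [ec]; ring)
          refine this.congr (fun _ _ _ => rfl) ?_
          intro j h1 h2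
          rw [hm, hL] at h2
          simp only [pert, if_pos h2]
      · intro hz hμ
        have hes0 : ∀ i, 1 ≤ i → i ≤ m → es i = 0 := by
          intro i h1 h2
          rw [← Sd_pert0 L m e0 es i h1 h2]
          unfold Sd
          rw [hz _ (by omega) (by omega)]
          split_ifs
          · simp
          · rw [hz _ (by omega) (by omega)]; simp
        have hmu' : ∀ i, 1 ≤ i → i ≤ m → ∃ z : ℤ, μ (a + m + 1 - i) - Sd L m T i = z := by
          intro i h1 h2
          have q := hes0 i h1 h2
          obtain ⟨z, hzz⟩ := hμ (a + m + 1 - i) (by omega) (by omega)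
          simp only [hes] at q
          apply int_of_phi
          rw [hzz, phi_int] at q
          rw [hzz]
          linarith
        have hSi : ∀ i, 1 ≤ i → i ≤ m → ∃ z : ℤ, Sd L m T i = z := by
          intro i h1 h2
          obtain ⟨z, hzz⟩ := hμ (a + m + 1 - i) (by omega) (by omega)
          obtain ⟨y, hy⟩ := hmu' i h1 h2
          exact ⟨z - y, by push_cast; linarith⟩
        intro j h1 h2
        rcases split_node (L := L) h1 with hj | ⟨i, hi, rfl⟩
        · refine hi0 ?_ ?_ j h1 hj
          · intro k g1 g2
            have := hz k g1 (by omega)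
            rwa [pert, if_pos g2] at this
          · intro c g1 g2
            obtain ⟨z, hzz⟩ := hmu' (a + m + 1 - c) (by omega) (by omega)
            have ec : a + m + 1 - (a + m + 1 - c) = c := by omega
            rw [ec] at hzz
            exact ⟨z, hzz⟩
        · exact Sd_int L m T hSi i hi (by omega)
    | false =>
      obtain ⟨hS, hG⟩ := h
      obtain ⟨e0, he0, hi0⟩ := ih _ _ hG
      generalize hL : σ.length * (σ.length + 1) / 2 = L at *
      generalize hm : σ.length + 1 = m at *
      set es : ℕ → ℝ := fun i => phi (μ (a + i + 1) + Sd L m T i) -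
        phi (μ (a + i + 1)) with hes
      refine ⟨pert L m e0 es, ?_, ?_⟩
      · intro ε hε ν hν
        simp only [GCP, hL, hm]
        refine ⟨?_, ?_⟩
        · intro i h1 h2
          rw [Sd_pert _ _ _ _ _ _ _ h1 h2, hν _ (by omega) (by omega), hν _ (by omega) (by omega)]
          have q1 := phi_mono hε (y := μ (a + i + 1) + Sd L m T i) (x := μ (a + i + 1))
            (by linarith [(hS i h1 h2).1])
          have q2 := phi_mono hε (x := μ (a + i + 1) + Sd L m T i) (y := μ (a + i))
            (by linarith [(hS i h1 h2).2])
          simp only [hes]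
          constructor <;> linarith
        · have := he0 ε hε (fun c => ν c +
            Sd L m (fun j => T j + ε * pert L m e0 es j) (c - (a + 1))) (by
              intro c h1 h2
              rw [Sd_pert _ _ _ _ _ _ _ (by omega) (by omega), hν _ (by omega) (by omega)]
              simp only [hes]
              have ec : a + (c - (a + 1)) + 1 = c := by omega
              rw [ec]; ring)
          refine this.congr (fun _ _ _ => rfl) ?_
          intro j h1 h2
          rw [hm, hL] at h2
          simp only [pert, if_pos h2]
      · intro hz hμ
        have hes0 : ∀ i, 1 ≤ i → i ≤ m → es i = 0 := by
          intro i h1 h2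
          rw [← Sd_pert0 L m e0 es i h1 h2]
          unfold Sd
          rw [hz _ (by omega) (by omega)]
          split_ifs
          · simp
          · rw [hz _ (by omega) (by omega)]; simp
        have hmu' : ∀ i, 1 ≤ i → i ≤ m → ∃ z : ℤ, μ (a + i + 1) + Sd L m T i = z := by
          intro i h1 h2
          have q := hes0 i h1 h2
          obtain ⟨z, hzz⟩ := hμ (a + i + 1) (by omega) (by omega)
          simp only [hes] at q
          apply int_of_phi
          rw [hzz, phi_int] at q
          rw [hzz]
          linarith
        have hSi : ∀ i, 1 ≤ i → i ≤ m → ∃ z : ℤ, Sd L m T i = z := by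
          intro i h1 h2
          obtain ⟨z, hzz⟩ := hμ (a + i + 1) (by omega) (by omega)
          obtain ⟨y, hy⟩ := hmu' i h1 h2
          exact ⟨y - z, by push_cast; linarith⟩
        intro j h1 h2
        rcases split_node (L := L) h1 with hj | ⟨i, hi, rfl⟩
        · refine hi0 ?_ ?_ j h1 hj
          · intro k g1 g2
            have := hz k g1 (by omega)
            rwa [pert, if_pos g2] at this
          · intro c g1 g2
            obtain ⟨z, hzz⟩ := hmu' (c - (a + 1)) (by omega) (by omega)
            have ec : a + (c - (a + 1)) + 1 = c := by omega
            rw [ec] at hzz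
            exact ⟨z, hzz⟩
        · exact Sd_int L m T hSi i hi (by omega)

/-- integrality.
If there is a sequence `(σ_1,…,σ_n) ∈ {A,D}^n` with
`ind_{σ_k}(C_{σ_{k+1}} ∘ ⋯ ∘ C_{σ_n}(i)) = 0` for all `k`, then for every dominant
integral weight `λ` the string polytope `Δ_i(λ)` is a lattice polytope: all of its
vertices (extreme points) lie in `ℤ^N`. -/
theorem statement17 (n : ℕ) (hn : 1 ≤ n) (i : List ℕ) (hi : IsReduced n i)
    (hsimp : SimplicialWord n i) (lam : ℕ → ℤ) (hlam : Dominant n lam) :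
    ∀ x ∈ (stringPolytope n i lam).extremePoints ℝ, ∀ j, ∃ z : ℤ, x j = (z : ℝ) := by
  intro x hx
  rw [mem_extremePoints] at hx
  obtain ⟨hx, hext⟩ := hx
  have hlen : i.length = Dim n := hi.1
  obtain ⟨σ, c, hcn, hc⟩ := hsimp
  have hred : Red 0 n (c n) := by
    rw [hcn]
    refine ⟨hi.1, ?_⟩
    intro y h1 h2
    rw [hi.2.2]
    change (if 1 ≤ y ∧ y ≤ n + 1 then n + 2 - y else y) = _
    rw [if_pos (by omega)]
    omega
  obtain ⟨τ, hτ, heq⟩ := exists_nf σ c n hred hc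
  rw [hcn] at heq
  obtain ⟨p, hp, hpoly⟩ := poly_equiv n heq (fun c => (lam c : ℝ))
  rw [hlen] at hp
  -- the top row
  set μ : ℕ → ℝ := fun c => ∑ d ∈ Finset.Icc c n, (lam d : ℝ) with hμ
  have hμint : ∀ c, ∃ z : ℤ, μ c = z := fun c => ⟨∑ d ∈ Finset.Icc c n, lam d, by simp [hμ]⟩
  have hμd : ∀ c, c ≤ n → μ c - μ (c + 1) = lam c := by
    intro c hc
    simp only [hμ]
    have : Finset.Icc c n = insert c (Finset.Icc (c + 1) n) := by
      ext y
      simp only [Finset.mem_Icc, Finset.mem_insert]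
      omega
    rw [this, Finset.sum_insert (by simp)]
    ring
  have hgc : ∀ T : ℕ → ℝ, GCP τ 0 μ T ↔ (ConeN n (nf 0 τ) T ∧
      LamN (nf 0 τ) (fun c => (lam c : ℝ)) T) := by
    intro T
    rw [gcp_iff, ← coneN_nf_iff, hτ]
    refine and_congr_right fun _ => ⟨?_, ?_⟩
    · apply LamN.congrR
      intro j h1 h2
      have := nf_letters 0 τ j h1 h2
      exact hμd _ (by omega)
    · apply LamN.congrR
      intro j h1 h2
      have := nf_letters 0 τ j h1 h2
      exact (hμd _ (by omega)).symm
  rw [mem_stringPolytope_iff n i hlen] at hx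
  have hG : GCP τ 0 μ (fun j => entry n x (p.symm j - 1)) := by
    rw [hgc, ← hpoly]
    simpa using hx
  obtain ⟨e, he, hInteg⟩ := perturb τ 0 μ _ hG
  rw [hτ] at he hInteg
  have hmem : ∀ ε : ℝ, (ε = 1 ∨ ε = -1) →
      (fun j : Fin (Dim n) => x j + ε * e (p ((j : ℕ) + 1))) ∈ stringPolytope n i lam := by
    intro ε hε
    have h1 := he ε hε μ (by
      intro c _ _
      obtain ⟨z, hz⟩ := hμint c
      rw [hz, phi_int]; ring)
    rw [hgc, ← hpoly] at h1
    rw [mem_stringPolytope_iff n i hlen]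
    have hcg : ∀ j, 1 ≤ j → j ≤ i.length →
        entry n x (p.symm (p j) - 1) + ε * e (p j) =
        entry n (fun j : Fin (Dim n) => x j + ε * e (p ((j : ℕ) + 1))) (j - 1) := by
      intro j g1 g2
      have g3 : j - 1 < Dim n := by omega
      have g4 : j - 1 + 1 = j := by omega
      rw [Equiv.symm_apply_apply]
      unfold entry
      rw [dif_pos g3, dif_pos g3]
      simp only [g4]
    exact ⟨h1.1.congr hcg, h1.2.congr hcg⟩
  have hz : ∀ j : Fin (Dim n), e (p ((j : ℕ) + 1)) = 0 := by
    intro j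
    have h1 := hext _ (hmem 1 (Or.inl rfl)) _ (hmem (-1) (Or.inr rfl)) (by
      refine ⟨1 / 2, 1 / 2, by norm_num, by norm_num, by norm_num, ?_⟩
      funext k
      simp only [Pi.add_apply, Pi.smul_apply, smul_eq_mul]
      ring)
    have h2 := congrFun h1.1 j
    try simp only at h2
    linarith
  have hz' : ∀ j, 1 ≤ j → j ≤ Dim n → e j = 0 := by
    intro j h1 h2
    have h3 := (hp (p.symm j)).1 (by rw [Equiv.apply_symm_apply]; exact ⟨h1, h2⟩)
    have h4 := hz ⟨p.symm j - 1, by omega⟩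
    try simp only at h4
    rwa [Nat.sub_add_cancel h3.1, Equiv.apply_symm_apply] at h4
  intro j
  have h1 := (hp ((j : ℕ) + 1)).2 ⟨by omega, j.2⟩
  obtain ⟨z, hzz⟩ := hInteg hz' (fun c _ _ => hμint c) (p ((j : ℕ) + 1)) h1.1 h1.2
  refine ⟨z, ?_⟩
  rw [← hzz]
  simp [entry]

end StringPolytope
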